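/- arXiv:2510.25576 — 5 statements merged into one kernel-verified Lean document; each statement's English description precedes it below -/
import Mathlib

section
/- Fix x₀ > 0 and L > 3x₀ and let H, θ, λ be the associated critical data. Let μ > μ₀ := −x₀/(L+x₀) + 2√(x₀/(L+x₀)), and set α = (1/2)√(μ + x₀/(L+x₀) + 2√(x₀/(L+x₀))) and γ = (1/2)√(μ + x₀/(L+x₀) − 2√(x₀/(L+x₀))). Then the four functions u₁(s) = sin((α−γ)θ(s)), u₂(s) = sin((α+γ)θ(s)), u₃(s) = cos((α−γ)θ(s)), u₄(s) = cos((α+γ)θ(s)) each satisfy (d²/ds²)(2H⁻³·ü) + μ·(d/ds)(2H⁻¹·u̇) + (2−λ)Hu = 0 on (0,2L), and they are linearly independent as functions on [0,2L]. -/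
open Real Set

noncomputable def sig (x0 L : ℝ) : ℝ := π * Real.sqrt (x0 / (L + x0))

noncomputable def kap (x0 L : ℝ) : ℝ := L / Real.sin (sig x0 L)

noncomputable def Hc (x0 L s : ℝ) : ℝ :=
  π / (sig x0 L * Real.sqrt (kap x0 L ^ 2 - (s - L) ^ 2))

/-- the angle function `θ(s) = (π/σ)(arcsin((s−L)/κ) + σ)` -/
noncomputable def th (x0 L s : ℝ) : ℝ :=
  π / sig x0 L * (Real.arcsin ((s - L) / kap x0 L) + sig x0 L)

/-- the fourth order operator `Lu = (2H⁻³ü)'' + μ(2H⁻¹u̇)' + (2−λ)Hu`,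
with `λ = 2L/(L+x₀)` -/
noncomputable def Lop (x0 L μ : ℝ) (u : ℝ → ℝ) (s : ℝ) : ℝ :=
  deriv (deriv fun t => 2 / Hc x0 L t ^ 3 * deriv (deriv u) t) s +
    μ * deriv (fun t => 2 / Hc x0 L t * deriv u t) s +
    (2 - 2 * L / (L + x0)) * Hc x0 L s * u s

/-- `α = (1/2)√(μ + x₀/(L+x₀) + 2√(x₀/(L+x₀)))` -/
noncomputable def alph (x0 L μ : ℝ) : ℝ :=
  1 / 2 * Real.sqrt (μ + x0 / (L + x0) + 2 * Real.sqrt (x0 / (L + x0)))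

/-- `γ = (1/2)√(μ + x₀/(L+x₀) − 2√(x₀/(L+x₀)))` -/
noncomputable def gamm (x0 L μ : ℝ) : ℝ :=
  1 / 2 * Real.sqrt (μ + x0 / (L + x0) - 2 * Real.sqrt (x0 / (L + x0)))

lemma aux_params (x0 L : ℝ) (hx0 : 0 < x0) (hL : 3 * x0 < L) :
    0 < sig x0 L ∧ sig x0 L < π / 2 ∧ sig x0 L ^ 2 = π ^ 2 * (x0 / (L + x0)) := by
  have hp := Real.pi_pos
  have hq : 0 < x0 / (L + x0) := by apply div_pos <;> linarith
  have hq4 : x0 / (L + x0) < 1 / 4 := by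
    rw [div_lt_div_iff₀ (by linarith) (by norm_num)]; linarith
  have hs : 0 < √(x0 / (L + x0)) := Real.sqrt_pos.2 hq
  have hsq := Real.sq_sqrt hq.le
  have hs2 : √(x0 / (L + x0)) < 1 / 2 := by nlinarith
  unfold sig
  refine ⟨by positivity, by nlinarith, by rw [mul_pow, hsq]⟩

lemma aux_kap (x0 L : ℝ) (hx0 : 0 < x0) (hL : 3 * x0 < L) :
    0 < Real.sin (sig x0 L) ∧ L < kap x0 L ∧ L / kap x0 L = Real.sin (sig x0 L) := by
  obtain ⟨h1, h2, -⟩ := aux_params x0 L hx0 hL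
  have hp := Real.pi_pos
  have hs : 0 < Real.sin (sig x0 L) := Real.sin_pos_of_pos_of_lt_pi h1 (by linarith)
  have hs1 : Real.sin (sig x0 L) < 1 := by
    rw [← Real.sin_pi_div_two]
    exact Real.sin_lt_sin_of_lt_of_le_pi_div_two (by linarith) le_rfl h2
  have hL0 : 0 < L := by linarith
  refine ⟨hs, ?_, ?_⟩
  · unfold kap
    rw [lt_div_iff₀ hs]; nlinarith
  · unfold kap
    field_simp

lemma aux_th (x0 L : ℝ) (hx0 : 0 < x0) (hL : 3 * x0 < L) (s : ℝ)
    (hs : s ∈ Set.Ioo (0:ℝ) (2 * L)) :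
    0 < Hc x0 L s ∧ HasDerivAt (th x0 L) (Hc x0 L s) s ∧
      HasDerivAt (Hc x0 L) (x0 / (L + x0) * (s - L) * Hc x0 L s ^ 3) s := by
  obtain ⟨h1, h2, h3⟩ := aux_params x0 L hx0 hL
  obtain ⟨-, hk, -⟩ := aux_kap x0 L hx0 hL
  obtain ⟨hs0, hs1⟩ := hs
  have hp := Real.pi_pos
  have hk0 : 0 < kap x0 L := by linarith
  have hD : 0 < kap x0 L ^ 2 - (s - L) ^ 2 := by nlinarith
  have hW : 0 < √(kap x0 L ^ 2 - (s - L) ^ 2) := Real.sqrt_pos.2 hD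
  have hW2 := Real.sq_sqrt hD.le
  refine ⟨by unfold Hc; positivity, ?_, ?_⟩
  · have ha : HasDerivAt (fun r : ℝ => (r - L) / kap x0 L) (1 / kap x0 L) s :=
      ((hasDerivAt_id s).sub_const L).div_const _
    have hb := (Real.hasDerivAt_arcsin (x := (s - L) / kap x0 L)
      (by rw [ne_eq, div_eq_iff hk0.ne']; intro h; linarith)
      (by rw [ne_eq, div_eq_iff hk0.ne']; intro h; linarith)).comp s ha
    have hc := (hb.add_const (sig x0 L)).const_mul (π / sig x0 L)
    refine hc.congr_deriv ?_
    have : 1 - ((s - L) / kap x0 L) ^ 2 = (kap x0 L ^ 2 - (s - L) ^ 2) / kap x0 L ^ 2 := by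
      field_simp
    rw [this, Real.sqrt_div hD.le, Real.sqrt_sq hk0.le]
    unfold Hc
    field_simp
  · have ha : HasDerivAt (fun r : ℝ => kap x0 L ^ 2 - (r - L) ^ 2) (-(2 * (s - L))) s := by
      have := (((hasDerivAt_id s).sub_const L).pow 2).const_sub (kap x0 L ^ 2)
      refine this.congr_deriv ?_
      simp
    have hb := ((ha.sqrt hD.ne').const_mul (sig x0 L))
    have hc := (hasDerivAt_const s π).div hb (by positivity)
    refine hc.congr_deriv ?_
    have hq : x0 / (L + x0) = sig x0 L ^ 2 / π ^ 2 := by rw [h3]; field_simp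
    rw [hq]
    unfold Hc
    generalize √(kap x0 L ^ 2 - (s - L) ^ 2) = W at *
    field_simp
    ring

lemma aux_Lop (x0 L μ m : ℝ) (hx0 : 0 < x0) (hL : 3 * x0 < L)
    (hm : m ^ 4 - (μ + x0 / (L + x0)) * m ^ 2 + x0 / (L + x0) = 0)
    (f g : ℝ → ℝ) (hf : ∀ t, HasDerivAt f (g t) t) (hg : ∀ t, HasDerivAt g (-m ^ 2 * f t) t)
    (s : ℝ) (hs : s ∈ Set.Ioo (0:ℝ) (2 * L)) :
    Lop x0 L μ (fun r => f (th x0 L r)) s = 0 := by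
  set q := x0 / (L + x0) with hq
  have hth := aux_th x0 L hx0 hL
  have cf : ∀ t ∈ Set.Ioo (0:ℝ) (2 * L),
      HasDerivAt (fun r => f (th x0 L r)) (g (th x0 L t) * Hc x0 L t) t :=
    fun t ht => (hf _).comp t (hth t ht).2.1
  have cg : ∀ t ∈ Set.Ioo (0:ℝ) (2 * L),
      HasDerivAt (fun r => g (th x0 L r)) (-m ^ 2 * f (th x0 L t) * Hc x0 L t) t :=
    fun t ht => (hg _).comp t (hth t ht).2.1
  have key : ∀ {F G : ℝ → ℝ} {G' t : ℝ}, t ∈ Set.Ioo (0:ℝ) (2 * L) →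
      (∀ r ∈ Set.Ioo (0:ℝ) (2 * L), F r = G r) → HasDerivAt G G' t → deriv F t = G' := by
    intro F G G' t ht h hG
    have : F =ᶠ[nhds t] G := Filter.eventually_of_mem (isOpen_Ioo.mem_nhds ht) h
    rw [this.deriv_eq, hG.deriv]
  have e1 : ∀ t ∈ Set.Ioo (0:ℝ) (2 * L),
      deriv (fun r => f (th x0 L r)) t = g (th x0 L t) * Hc x0 L t :=
    fun t ht => (cf t ht).deriv
  have e2 : ∀ t ∈ Set.Ioo (0:ℝ) (2 * L),
      deriv (deriv (fun r => f (th x0 L r))) t =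
        -m ^ 2 * f (th x0 L t) * Hc x0 L t * Hc x0 L t +
          g (th x0 L t) * (q * (t - L) * Hc x0 L t ^ 3) :=
    fun t ht => key ht e1 ((cg t ht).mul (hth t ht).2.2)
  have e3 : ∀ t ∈ Set.Ioo (0:ℝ) (2 * L),
      2 / Hc x0 L t ^ 3 * deriv (deriv (fun r => f (th x0 L r))) t =
        (2 * q) * ((t - L) * g (th x0 L t)) + (-2 * m ^ 2) * (f (th x0 L t) / Hc x0 L t) := by
    intro t ht
    rw [e2 t ht]
    have := (hth t ht).1
    field_simp
    ring
  have e4 : ∀ t ∈ Set.Ioo (0:ℝ) (2 * L),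
      deriv (fun t => 2 / Hc x0 L t ^ 3 * deriv (deriv (fun r => f (th x0 L r))) t) t =
        2 * (q - m ^ 2) * g (th x0 L t) := by
    intro t ht
    have h0 := (hth t ht).1
    rw [key ht e3 (((((hasDerivAt_id t).sub_const L).mul (cg t ht)).const_mul (2 * q)).add
      (((cf t ht).div (hth t ht).2.2 h0.ne').const_mul (-2 * m ^ 2)))]
    simp only [id]
    field_simp
    ring
  have e5 : ∀ t ∈ Set.Ioo (0:ℝ) (2 * L),
      2 / Hc x0 L t * deriv (fun r => f (th x0 L r)) t = 2 * g (th x0 L t) := by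
    intro t ht
    have h0 := (hth t ht).1
    rw [e1 t ht]
    field_simp
  have hlam : 2 - 2 * L / (L + x0) = 2 * q := by
    rw [hq]
    have : L + x0 ≠ 0 := by linarith
    field_simp
    ring
  unfold Lop
  rw [key hs e4 ((cg s hs).const_mul _), key hs e5 ((cg s hs).const_mul _), hlam]
  linear_combination 2 * Hc x0 L s * f (th x0 L s) * hm

lemma aux_sin (m t : ℝ) : HasDerivAt (fun r => Real.sin (m * r)) (m * Real.cos (m * t)) t := by
  have := ((hasDerivAt_id t).const_mul m).sin
  refine this.congr_deriv ?_
  simp [mul_comm]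

lemma aux_cos (m t : ℝ) : HasDerivAt (fun r => Real.cos (m * r)) (-m * Real.sin (m * t)) t := by
  have := ((hasDerivAt_id t).const_mul m).cos
  refine this.congr_deriv ?_
  simp [mul_comm]

lemma aux_comb (m n a b c d : ℝ) (t : ℝ) :
    HasDerivAt (fun r => a * Real.sin (m * r) + b * Real.sin (n * r) + c * Real.cos (m * r)
      + d * Real.cos (n * r)) ((-m * c) * Real.sin (m * t) + (-n * d) * Real.sin (n * t)
      + (m * a) * Real.cos (m * t) + (n * b) * Real.cos (n * t)) t := by
  have := ((((aux_sin m t).const_mul a).add ((aux_sin n t).const_mul b)).add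
    ((aux_cos m t).const_mul c)).add ((aux_cos n t).const_mul d)
  refine this.congr_deriv ?_
  ring

lemma aux_step (m n a b c d : ℝ)
    (h : ∀ t ∈ Set.Ioo (0:ℝ) (2 * π), a * Real.sin (m * t) + b * Real.sin (n * t)
      + c * Real.cos (m * t) + d * Real.cos (n * t) = 0) :
    ∀ t ∈ Set.Ioo (0:ℝ) (2 * π), (-m * c) * Real.sin (m * t) + (-n * d) * Real.sin (n * t)
      + (m * a) * Real.cos (m * t) + (n * b) * Real.cos (n * t) = 0 := by
  intro t ht
  have h1 : (fun r => a * Real.sin (m * r) + b * Real.sin (n * r) + c * Real.cos (m * r)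
      + d * Real.cos (n * r)) =ᶠ[nhds t] fun _ => (0:ℝ) :=
    Filter.eventually_of_mem (isOpen_Ioo.mem_nhds ht) h
  have := h1.deriv_eq
  rw [(aux_comb m n a b c d t).deriv] at this
  simpa using this

lemma aux_rot (x a c : ℝ) (h1 : a * Real.sin x + c * Real.cos x = 0)
    (h2 : a * Real.cos x - c * Real.sin x = 0) : a = 0 ∧ c = 0 := by
  have := Real.sin_sq_add_cos_sq x
  constructor
  · linear_combination Real.sin x * h1 + Real.cos x * h2 - a * this
  · linear_combination Real.cos x * h1 - Real.sin x * h2 - c * this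

lemma aux_indep (m n a b c d : ℝ) (hm : 0 < m) (hmn : m < n)
    (h : ∀ t ∈ Set.Ioo (0:ℝ) (2 * π), a * Real.sin (m * t) + b * Real.sin (n * t)
      + c * Real.cos (m * t) + d * Real.cos (n * t) = 0) :
    a = 0 ∧ b = 0 ∧ c = 0 ∧ d = 0 := by
  have hp : π ∈ Set.Ioo (0:ℝ) (2 * π) := ⟨Real.pi_pos, by linarith [Real.pi_pos]⟩
  have d1 := aux_step _ _ _ _ _ _ h
  have d2 := aux_step _ _ _ _ _ _ d1
  have d3 := aux_step _ _ _ _ _ _ d2 π hp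
  replace d2 := d2 π hp
  replace d1 := d1 π hp
  replace h := h π hp
  have hn : 0 < n := by linarith
  have hne : n ^ 2 - m ^ 2 ≠ 0 := by nlinarith
  have A1 : a * Real.sin (m * π) + c * Real.cos (m * π) = 0 := by
    apply mul_left_cancel₀ hne; linear_combination n ^ 2 * h + d2
  have A2 : a * Real.cos (m * π) - c * Real.sin (m * π) = 0 := by
    apply mul_left_cancel₀ hne; apply mul_left_cancel₀ hm.ne'
    linear_combination n ^ 2 * d1 + d3
  have B1 : b * Real.sin (n * π) + d * Real.cos (n * π) = 0 := by
    linear_combination h - A1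
  have B2 : b * Real.cos (n * π) - d * Real.sin (n * π) = 0 := by
    apply mul_left_cancel₀ hn.ne'
    linear_combination d1 - m * A2
  obtain ⟨ha, hc⟩ := aux_rot _ _ _ A1 A2
  obtain ⟨hb, hd⟩ := aux_rot _ _ _ B1 B2
  exact ⟨ha, hb, hc, hd⟩

lemma aux_surj (x0 L : ℝ) (hx0 : 0 < x0) (hL : 3 * x0 < L) (t : ℝ)
    (ht : t ∈ Set.Ioo (0:ℝ) (2 * π)) : ∃ s ∈ Set.Icc (0:ℝ) (2 * L), th x0 L s = t := by
  obtain ⟨h1, h2, h3⟩ := aux_params x0 L hx0 hL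
  obtain ⟨hs, hk, hd⟩ := aux_kap x0 L hx0 hL
  obtain ⟨t0, t1⟩ := ht
  have hp := Real.pi_pos
  have hk0 : 0 < kap x0 L := by linarith
  have hL' : L = kap x0 L * Real.sin (sig x0 L) := by rw [← hd]; field_simp
  have hy0 : -sig x0 L ≤ sig x0 L * t / π - sig x0 L := by
    have : 0 ≤ sig x0 L * t / π := by positivity
    linarith
  have hy1 : sig x0 L * t / π - sig x0 L ≤ sig x0 L := by
    have : sig x0 L * t / π ≤ 2 * sig x0 L := by
      rw [div_le_iff₀ hp]; nlinarith
    linarith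
  have i0 := Real.sin_le_sin_of_le_of_le_pi_div_two (by linarith) (by linarith) hy0
  have i1 := Real.sin_le_sin_of_le_of_le_pi_div_two (by linarith) (by linarith) hy1
  rw [Real.sin_neg] at i0
  have j0 := mul_le_mul_of_nonneg_left i0 hk0.le
  have j1 := mul_le_mul_of_nonneg_left i1 hk0.le
  refine ⟨L + kap x0 L * Real.sin (sig x0 L * t / π - sig x0 L), ⟨by linarith, by linarith⟩, ?_⟩
  unfold th
  rw [add_sub_cancel_left, mul_div_cancel_left₀ _ hk0.ne',
    Real.arcsin_sin (by linarith) (by linarith)]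
  field_simp
  ring

lemma aux_ag (x0 L μ : ℝ) (hx0 : 0 < x0) (hL : 3 * x0 < L)
    (hμ : -(x0 / (L + x0)) + 2 * Real.sqrt (x0 / (L + x0)) < μ) :
    0 < gamm x0 L μ ∧ gamm x0 L μ < alph x0 L μ ∧
    (alph x0 L μ - gamm x0 L μ) ^ 4 - (μ + x0 / (L + x0)) * (alph x0 L μ - gamm x0 L μ) ^ 2
      + x0 / (L + x0) = 0 ∧
    (alph x0 L μ + gamm x0 L μ) ^ 4 - (μ + x0 / (L + x0)) * (alph x0 L μ + gamm x0 L μ) ^ 2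
      + x0 / (L + x0) = 0 := by
  have hq : 0 < x0 / (L + x0) := by apply div_pos <;> linarith
  unfold alph gamm
  set q := x0 / (L + x0)
  have hs : 0 < √q := Real.sqrt_pos.2 hq
  have hsq := Real.sq_sqrt hq.le
  have hA := Real.sq_sqrt (show 0 ≤ μ + q + 2 * √q by linarith)
  have hB := Real.sq_sqrt (show 0 ≤ μ + q - 2 * √q by linarith)
  have hBp : 0 < √(μ + q - 2 * √q) := Real.sqrt_pos.2 (by linarith)
  have hlt : √(μ + q - 2 * √q) < √(μ + q + 2 * √q) :=
    Real.sqrt_lt_sqrt (by linarith) (by linarith)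
  generalize √(μ + q + 2 * √q) = A at *
  generalize √(μ + q - 2 * √q) = B at *
  generalize √q = r at *
  have hmq : μ + q = (A ^ 2 + B ^ 2) / 2 := by linarith
  have hr : r = (A ^ 2 - B ^ 2) / 4 := by linarith
  refine ⟨by linarith, by linarith, ?_, ?_⟩
  · rw [hmq, ← hsq, hr]; ring
  · rw [hmq, ← hsq, hr]; ring

/-- for `μ > μ₀`, the functions `sin((α∓γ)θ)`, `cos((α∓γ)θ)` solve the homogeneous
stability equation and are linearly independent on `[0,2L]`. -/
theorem statement15 (x0 L μ : ℝ) (hx0 : 0 < x0) (hL : 3 * x0 < L)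
    (hμ : -(x0 / (L + x0)) + 2 * Real.sqrt (x0 / (L + x0)) < μ) :
    (∀ s ∈ Set.Ioo (0:ℝ) (2 * L),
        Lop x0 L μ (fun r => Real.sin ((alph x0 L μ - gamm x0 L μ) * th x0 L r)) s = 0) ∧
    (∀ s ∈ Set.Ioo (0:ℝ) (2 * L),
        Lop x0 L μ (fun r => Real.sin ((alph x0 L μ + gamm x0 L μ) * th x0 L r)) s = 0) ∧
    (∀ s ∈ Set.Ioo (0:ℝ) (2 * L),
        Lop x0 L μ (fun r => Real.cos ((alph x0 L μ - gamm x0 L μ) * th x0 L r)) s = 0) ∧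
    (∀ s ∈ Set.Ioo (0:ℝ) (2 * L),
        Lop x0 L μ (fun r => Real.cos ((alph x0 L μ + gamm x0 L μ) * th x0 L r)) s = 0) ∧
    ∀ a b c d : ℝ,
      (∀ s ∈ Set.Icc (0:ℝ) (2 * L),
          a * Real.sin ((alph x0 L μ - gamm x0 L μ) * th x0 L s) +
            b * Real.sin ((alph x0 L μ + gamm x0 L μ) * th x0 L s) +
            c * Real.cos ((alph x0 L μ - gamm x0 L μ) * th x0 L s) +
            d * Real.cos ((alph x0 L μ + gamm x0 L μ) * th x0 L s) = 0) →
      a = 0 ∧ b = 0 ∧ c = 0 ∧ d = 0 := by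
  obtain ⟨hg, hag, h1, h2⟩ := aux_ag x0 L μ hx0 hL hμ
  have S : ∀ m : ℝ, m ^ 4 - (μ + x0 / (L + x0)) * m ^ 2 + x0 / (L + x0) = 0 →
      ∀ s ∈ Set.Ioo (0:ℝ) (2 * L), Lop x0 L μ (fun r => Real.sin (m * th x0 L r)) s = 0 :=
    fun m hm s hs => aux_Lop x0 L μ m hx0 hL hm (fun t => Real.sin (m * t))
      (fun t => m * Real.cos (m * t)) (aux_sin m)
      (fun t => ((aux_cos m t).const_mul m).congr_deriv (by ring)) s hs
  have C : ∀ m : ℝ, m ^ 4 - (μ + x0 / (L + x0)) * m ^ 2 + x0 / (L + x0) = 0 →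
      ∀ s ∈ Set.Ioo (0:ℝ) (2 * L), Lop x0 L μ (fun r => Real.cos (m * th x0 L r)) s = 0 :=
    fun m hm s hs => aux_Lop x0 L μ m hx0 hL hm (fun t => Real.cos (m * t))
      (fun t => -m * Real.sin (m * t)) (aux_cos m)
      (fun t => ((aux_sin m t).const_mul (-m)).congr_deriv (by ring)) s hs
  refine ⟨S _ h1, S _ h2, C _ h1, C _ h2, ?_⟩
  intro a b c d h
  refine aux_indep (alph x0 L μ - gamm x0 L μ) (alph x0 L μ + gamm x0 L μ) a b c d (sub_pos.2 hag) (by linarith) ?_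
  intro t ht
  obtain ⟨s, hs, rfl⟩ := aux_surj x0 L hx0 hL t ht
  exact h s hs
end

section
/- Fix x₀ > 0 and L > 3x₀ and let H, θ, λ be the associated critical data, and let ν ∈ ℝ. (i) If μ ∈ ℝ with μ ≠ 1, then u(s) = (ν/((2−λ)(1−μ)))·H(s)⁻¹ satisfies (d²/ds²)(2H(s)⁻³·ü(s)) + μ·(d/ds)(2H(s)⁻¹·u̇(s)) + (2−λ)H(s)u(s) = ν on (0,2L). (ii) If μ = 1, then u(s) = (ν/(2λ))·θ(s)·(s−L) satisfies the same equation with μ = 1. -/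
open Real Set

lemma aux_congr {L : ℝ} {f g g' : ℝ → ℝ} (h : ∀ s ∈ Set.Ioo (0:ℝ) (2 * L), f s = g s)
    (hg : ∀ s ∈ Set.Ioo (0:ℝ) (2 * L), HasDerivAt g (g' s) s) :
    ∀ s ∈ Set.Ioo (0:ℝ) (2 * L), deriv f s = g' s := by
  intro s hs
  have : f =ᶠ[nhds s] g := by
    filter_upwards [isOpen_Ioo.mem_nhds hs] with t ht using h t ht
  rw [this.deriv_eq, (hg s hs).deriv]

lemma aux_data (x0 L : ℝ) (hx0 : 0 < x0) (hL : 3 * x0 < L) :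
    ∃ (a : ℝ) (q : ℝ → ℝ), 0 < a ∧ a ^ 2 = x0 / (L + x0) ∧
      (∀ s, Hc x0 L s = 1 / (a * q s)) ∧
      (∀ s ∈ Set.Ioo (0:ℝ) (2 * L), 0 < q s) ∧
      (∀ s ∈ Set.Ioo (0:ℝ) (2 * L), q s ^ 2 = kap x0 L ^ 2 - (s - L) ^ 2) ∧
      (∀ s ∈ Set.Ioo (0:ℝ) (2 * L), HasDerivAt q (-(s - L) / q s) s) ∧
      (∀ s ∈ Set.Ioo (0:ℝ) (2 * L), HasDerivAt (th x0 L) (1 / (a * q s)) s) := by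
  have hpos : 0 < x0 / (L + x0) := by apply div_pos <;> linarith
  have hlt : x0 / (L + x0) < 1 := by rw [div_lt_one] <;> linarith
  have ha : 0 < Real.sqrt (x0 / (L + x0)) := Real.sqrt_pos.2 hpos
  have ha1 : Real.sqrt (x0 / (L + x0)) < 1 := by
    rw [Real.sqrt_lt' one_pos]; simpa using hlt
  have hsig : sig x0 L = π * Real.sqrt (x0 / (L + x0)) := rfl
  have hsin : 0 < Real.sin (sig x0 L) := by
    apply Real.sin_pos_of_pos_of_lt_pi
    · rw [hsig]; positivity
    · rw [hsig]; nlinarith [Real.pi_pos]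
  have hk : L ≤ kap x0 L := by
    unfold kap
    rw [le_div_iff₀ hsin]
    nlinarith [Real.sin_le_one (sig x0 L)]
  have hk0 : 0 < kap x0 L := by linarith
  have hp : ∀ s ∈ Set.Ioo (0:ℝ) (2 * L), 0 < kap x0 L ^ 2 - (s - L) ^ 2 := by
    intro s hs
    have h1 := hs.1
    have h2 := hs.2
    have : 0 < (kap x0 L - (s - L)) * (kap x0 L + (s - L)) := by
      apply mul_pos <;> linarith
    nlinarith
  refine ⟨Real.sqrt (x0 / (L + x0)), fun s => Real.sqrt (kap x0 L ^ 2 - (s - L) ^ 2),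
    ha, Real.sq_sqrt hpos.le, ?_, ?_, ?_, ?_, ?_⟩
  · intro s
    unfold Hc
    rw [hsig, mul_assoc, ← div_div, div_self Real.pi_ne_zero]
  · intro s hs
    exact Real.sqrt_pos.2 (hp s hs)
  · intro s hs
    exact Real.sq_sqrt (hp s hs).le
  · intro s hs
    have h0 : HasDerivAt (fun t : ℝ => kap x0 L ^ 2 - (t - L) ^ 2) (-(2 * (s - L))) s := by
      refine ((((hasDerivAt_id s).sub_const L).pow 2).const_sub (kap x0 L ^ 2)).congr_deriv ?_
      simp
    have hq := Real.sqrt_pos.2 (hp s hs)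
    refine (h0.sqrt (hp s hs).ne').congr_deriv ?_
    field_simp
  · intro s hs
    have h1 := hs.1
    have h2 := hs.2
    have e1 : (s - L) / kap x0 L ≠ -1 := by
      intro h; rw [div_eq_iff hk0.ne'] at h; linarith
    have e2 : (s - L) / kap x0 L ≠ 1 := by
      intro h; rw [div_eq_iff hk0.ne'] at h; linarith
    have h := ((((Real.hasDerivAt_arcsin e1 e2).comp s
      (((hasDerivAt_id s).sub_const L).div_const (kap x0 L))).add_const (sig x0 L)).const_mul
      (π / sig x0 L))
    have hq := Real.sqrt_pos.2 (hp s hs)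
    have e3 : Real.sqrt (1 - ((s - L) / kap x0 L) ^ 2)
        = Real.sqrt (kap x0 L ^ 2 - (s - L) ^ 2) / kap x0 L := by
      have : 1 - ((s - L) / kap x0 L) ^ 2 = (kap x0 L ^ 2 - (s - L) ^ 2) / kap x0 L ^ 2 := by
        field_simp
      rw [this, Real.sqrt_div (hp s hs).le, Real.sqrt_sq hk0.le]
    refine HasDerivAt.congr_deriv (f' := _) h ?_
    rw [e3, hsig]
    have := Real.pi_pos
    field_simp

theorem statement16 (x0 L ν : ℝ) (hx0 : 0 < x0) (hL : 3 * x0 < L) :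
    (∀ μ : ℝ, μ ≠ 1 → ∀ s ∈ Set.Ioo (0:ℝ) (2 * L),
        Lop x0 L μ
          (fun r => ν / ((2 - 2 * L / (L + x0)) * (1 - μ)) * (Hc x0 L r)⁻¹) s = ν) ∧
    ∀ s ∈ Set.Ioo (0:ℝ) (2 * L),
      Lop x0 L 1
        (fun r => ν / (2 * (2 * L / (L + x0))) * (th x0 L r * (r - L))) s = ν := by
  obtain ⟨a, q, ha, ha2, hH, hq, hq2, hdq, hdth⟩ := aux_data x0 L hx0 hL
  have hlam : 2 * L / (L + x0) = 2 - 2 * a ^ 2 := by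
    rw [ha2]; have : L + x0 ≠ 0 := by linarith
    field_simp; ring
  have ha1 : a ^ 2 < 1 := by
    rw [ha2, div_lt_one] <;> linarith
  have hx : ∀ s : ℝ, HasDerivAt (fun t => t - L) 1 s := fun s => (hasDerivAt_id s).sub_const L
  constructor
  · intro μ hμ s hs
    unfold Lop
    rw [hlam]
    have hμ' : 1 - μ ≠ 0 := sub_ne_zero.2 hμ.symm
    obtain ⟨c, hc⟩ : ∃ c, c = ν / ((2 - (2 - 2 * a ^ 2)) * (1 - μ)) := ⟨_, rfl⟩
    have hcν : 2 * a ^ 2 * c * (1 - μ) = ν := by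
      rw [hc]; field_simp; ring
    rw [← hc]
    simp only [hH]
    have d1 := aux_congr (L := L) (f := fun r => c * (1 / (a * q r))⁻¹)
      (g := fun r => c * (a * q r)) (g' := fun r => c * (a * (-(r - L) / q r)))
      (by intro t ht; simp) (fun t ht => ((hdq t ht).const_mul a).const_mul c)
    have d2 := aux_congr (L := L) (g' := fun r => -c * a * kap x0 L ^ 2 / q r ^ 3) d1 (by
      intro t ht
      have h := ((((hx t).neg.div (hdq t ht) (hq t ht).ne')).const_mul a).const_mul c
      refine h.congr_deriv ?_
      have := hq t ht
      have e : kap x0 L ^ 2 = q t ^ 2 + (t - L) ^ 2 := by rw [hq2 t ht]; ring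
      rw [e]
      simp only [Pi.neg_apply]
      field_simp
      ring)
    have d3 := aux_congr (L := L)
      (f := fun t => 2 / (1 / (a * q t)) ^ 3 * deriv (deriv fun r => c * (1 / (a * q r))⁻¹) t)
      (g := fun r => -2 * c * a ^ 4 * kap x0 L ^ 2) (g' := fun _ => 0) (by
        intro t ht
        have := hq t ht
        simp only [d2 t ht]
        field_simp) (fun t ht => hasDerivAt_const _ _)
    have d4 := aux_congr (L := L) (g' := fun _ => 0) d3 (fun t ht => hasDerivAt_const _ _)
    have d5 := aux_congr (L := L)
      (f := fun t => 2 / (1 / (a * q t)) * deriv (fun r => c * (1 / (a * q r))⁻¹) t)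
      (g := fun r => (-2 * c * a ^ 2) * (r - L)) (g' := fun _ => (-2 * c * a ^ 2) * 1) (by
        intro t ht
        have := hq t ht
        simp only [d1 t ht]
        field_simp) (fun t ht => (hx t).const_mul _)
    rw [d4 s hs, d5 s hs]
    have := hq s hs
    rw [← hcν]
    field_simp
    ring
  · intro s hs
    unfold Lop
    rw [hlam]
    obtain ⟨c, hc⟩ : ∃ c, c = ν / (2 * (2 - 2 * a ^ 2)) := ⟨_, rfl⟩
    have hcν : c * (2 * (2 - 2 * a ^ 2)) = ν := by
      rw [hc, div_mul_cancel₀]; intro h; linarith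
    rw [← hc]
    simp only [hH]
    have d1 := aux_congr (L := L) (f := fun r => c * (th x0 L r * (r - L)))
      (g := fun r => c * (th x0 L r * (r - L)))
      (g' := fun r => c * (1 / (a * q r) * (r - L) + th x0 L r * 1))
      (fun t ht => rfl) (fun t ht => ((hdth t ht).mul (hx t)).const_mul c)
    have d2 := aux_congr (L := L)
      (g' := fun r => c * (2 / (a * q r) + (r - L) ^ 2 / (a * q r ^ 3))) d1 (by
      intro t ht
      have hne : a * q t ≠ 0 := (mul_pos ha (hq t ht)).ne'
      have h := (((((hasDerivAt_const t (1:ℝ)).div ((hdq t ht).const_mul a) hne).mul (hx t)).add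
        ((hdth t ht).mul_const 1)).const_mul c)
      refine h.congr_deriv ?_
      have := hq t ht
      simp only [Pi.div_apply]
      field_simp
      ring)
    have d3 := aux_congr (L := L)
      (f := fun t => 2 / (1 / (a * q t)) ^ 3 *
        deriv (deriv fun r => c * (th x0 L r * (r - L))) t)
      (g := fun r => (2 * c * a ^ 2) * (2 * kap x0 L ^ 2 - (r - L) ^ 2))
      (g' := fun r => (-4 * c * a ^ 2) * (r - L)) (by
        intro t ht
        have := hq t ht
        have e : kap x0 L ^ 2 = q t ^ 2 + (t - L) ^ 2 := by rw [hq2 t ht]; ring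
        simp only [d2 t ht]
        rw [e]
        field_simp
        ring) (fun t ht => by
          refine ((((hx t).pow 2).const_sub _).const_mul _).congr_deriv ?_
          simp
          ring)
    have d4 := aux_congr (L := L) (g' := fun _ => (-4 * c * a ^ 2) * 1) d3
      (fun t ht => (hx t).const_mul _)
    have d5 := aux_congr (L := L)
      (f := fun t => 2 / (1 / (a * q t)) * deriv (fun r => c * (th x0 L r * (r - L))) t)
      (g := fun r => (2 * c) * (a * (q r * th x0 L r) + (r - L)))
      (g' := fun r => (2 * c) *
        (a * (-(r - L) / q r * th x0 L r + q r * (1 / (a * q r))) + 1)) (by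
        intro t ht
        have := hq t ht
        simp only [d1 t ht]
        field_simp
        ring) (fun t ht => ((((hdq t ht).mul (hdth t ht)).const_mul a).add (hx t)).const_mul _)
    rw [d4 s hs, d5 s hs]
    have := hq s hs
    rw [← hcν]
    field_simp
    ring
end

section
/- Fix x₀ > 0 and L > 3x₀ and let H, λ be the associated critical data. Suppose μ > 0 and u ∈ C⁴([0,2L], ℝ) is not identically zero and satisfies the boundary value problem: (d²/ds²)(2H(s)⁻³·ü(s)) + μ·(d/ds)(2H(s)⁻¹·u̇(s)) + (2−λ)H(s)u(s) = 0 on (0,2L), u(0) = u(2L) = 0, and u̇(0) = u̇(2L) = 0. Then μ > 1. -/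
open Real Set

lemma wirt (w w' : ℝ → ℝ) (hw : ∀ x, HasDerivAt w (w' x) x) (hc : Continuous w')
    (h0 : w 0 = 0) (h1 : w (2 * π) = 0) (hm : ∫ x in (0:ℝ)..(2 * π), w x = 0) :
    ∫ x in (0:ℝ)..(2 * π), w x ^ 2 ≤ ∫ x in (0:ℝ)..(2 * π), w' x ^ 2 := by
  have hab : (0:ℝ) < 2 * π := by positivity
  have hwc : Continuous w := continuous_iff_continuousAt.2 fun x => (hw x).continuousAt
  have mem : ∀ f : ℝ → ℝ, Continuous f →
      MeasureTheory.MemLp (fun x => (f x : ℂ)) 2 (MeasureTheory.volume.restrict (Ioc 0 (2 * π))) := by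
    intro f hf
    have h : Continuous fun x => (f x : ℂ) := by fun_prop
    obtain ⟨C, hC⟩ := (isCompact_Icc (a := (0:ℝ)) (b := 2 * π)).exists_bound_of_continuousOn h.continuousOn
    refine MeasureTheory.MemLp.of_bound h.aestronglyMeasurable C ?_
    filter_upwards [MeasureTheory.ae_restrict_mem measurableSet_Ioc] with x hx
    exact hC x (Ioc_subset_Icc_self hx)
  have A := hasSum_sq_fourierCoeffOn hab (mem w hwc)
  have B := hasSum_sq_fourierCoeffOn hab (mem w' hc)
  have key := hasSum_le (fun n => ?_) A B
  · simp only [smul_eq_mul, Complex.norm_real, norm_eq_abs, sq_abs] at key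
    exact le_of_mul_le_mul_left key (by rw [sub_zero]; positivity)
  · by_cases hn : n = 0
    · subst hn
      rw [fourierCoeffOn_eq_integral]
      have : (∫ x in (0:ℝ)..(2 * π), fourier (-0) (x : AddCircle (2 * π - 0)) • (w x : ℂ)) = 0 := by
        simp only [neg_zero, fourier_zero, one_smul]
        rw [intervalIntegral.integral_ofReal, hm]; simp
      rw [this]; simp
    · have h := fourierCoeffOn_of_hasDerivAt hab (f := fun x => (w x : ℂ)) (f' := fun x => (w' x : ℂ)) hn
        (fun x _ => (hw x).ofReal_comp) (by apply Continuous.intervalIntegrable; fun_prop)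
      rw [h, h0, h1]
      have hn' : (1:ℝ) ≤ |(n:ℝ)| := by exact_mod_cast Int.one_le_abs hn
      gcongr
      simp only [sub_self, mul_zero, zero_sub, norm_mul, norm_neg]
      have hp := pi_pos
      simp only [norm_div, norm_mul, norm_neg, Complex.norm_real, Complex.norm_I, norm_one]
      simp [abs_of_pos hp]
      rw [show (|(n:ℝ)|)⁻¹ * (π⁻¹ * 2⁻¹) * (2 * π * ‖fourierCoeffOn hab (fun x => (w' x : ℂ)) n‖)
        = (|(n:ℝ)|)⁻¹ * ‖fourierCoeffOn hab (fun x => (w' x : ℂ)) n‖ by field_simp]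
      exact mul_le_of_le_one_left (norm_nonneg _) (inv_le_one_of_one_le₀ hn')

lemma core (v v1 v2 : ℝ → ℝ) (hv : ∀ x, HasDerivAt v (v1 x) x) (hv1 : ∀ x, HasDerivAt v1 (v2 x) x)
    (hc : Continuous v2) (e m : ℝ) (he : 0 < e) (he1 : e < 1) (hm : m ≤ 1)
    (a0 : v 0 = 0) (b0 : v (2 * π) = 0) (a1 : v1 0 = 0) (b1 : v1 (2 * π) = 0)
    (hQ : ∫ x in (0:ℝ)..(2 * π), (v2 x ^ 2 + e ^ 2 * v x ^ 2 - (m + e ^ 2) * v1 x ^ 2) = 0) :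
    ∀ x ∈ Icc 0 (2 * π), v x = 0 := by
  have hab : (0:ℝ) < 2 * π := by positivity
  have cv : Continuous v := continuous_iff_continuousAt.2 fun x => (hv x).continuousAt
  have cv1 : Continuous v1 := continuous_iff_continuousAt.2 fun x => (hv1 x).continuousAt
  have W := wirt v1 v2 hv1 hc a1 b1 (by
    rw [intervalIntegral.integral_eq_sub_of_hasDerivAt (fun x _ => hv x) (cv1.intervalIntegrable _ _), a0, b0, sub_zero])
  have P : ∫ x in (0:ℝ)..(2 * π), (v1 x * v1 x + v x * v2 x) = 0 := by
    rw [intervalIntegral.integral_eq_sub_of_hasDerivAt (fun x _ => (hv x).mul (hv1 x))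
      (by apply Continuous.intervalIntegrable; fun_prop)]
    simp [a0, b0]
  have N : 0 ≤ ∫ x in (0:ℝ)..(2 * π), v1 x ^ 2 :=
    intervalIntegral.integral_nonneg hab.le fun x _ => sq_nonneg _
  have E : ∫ x in (0:ℝ)..(2 * π), (v2 x ^ 2 + e ^ 2 * v x ^ 2 - (m + e ^ 2) * v1 x ^ 2) =
      e ^ 2 * (∫ x in (0:ℝ)..(2 * π), (v2 x + v x) ^ 2)
      + (1 - e ^ 2) * (∫ x in (0:ℝ)..(2 * π), v2 x ^ 2)
      - (1 - e ^ 2) * (∫ x in (0:ℝ)..(2 * π), v1 x ^ 2)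
      + (1 - m) * (∫ x in (0:ℝ)..(2 * π), v1 x ^ 2)
      - 2 * e ^ 2 * (∫ x in (0:ℝ)..(2 * π), (v1 x * v1 x + v x * v2 x)) := by
    simp only [← intervalIntegral.integral_const_mul]
    rw [← intervalIntegral.integral_add, ← intervalIntegral.integral_sub,
      ← intervalIntegral.integral_add, ← intervalIntegral.integral_sub]
    · congr 1; ext x; ring
    all_goals (apply Continuous.intervalIntegrable; fun_prop)
  rw [hQ, P] at E
  have hz : ∀ x ∈ Icc 0 (2 * π), v2 x + v x = 0 := by
    by_contra! hne
    obtain ⟨c, hc1, hc2⟩ := hne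
    have := intervalIntegral.integral_pos (f := fun x => (v2 x + v x) ^ 2) hab
      (by fun_prop) (fun x _ => sq_nonneg _) ⟨c, hc1, by positivity⟩
    have h1 : 0 < e ^ 2 * ∫ x in (0:ℝ)..(2 * π), (v2 x + v x) ^ 2 := by positivity
    have h2 : 0 ≤ (1 - e ^ 2) * ((∫ x in (0:ℝ)..(2 * π), v2 x ^ 2) - ∫ x in (0:ℝ)..(2 * π), v1 x ^ 2) :=
      mul_nonneg (by nlinarith) (by linarith)
    have h3 := mul_nonneg (sub_nonneg.2 hm) N
    linarith
  have hk := constant_of_has_deriv_right_zero (f := fun x => v x ^ 2 + v1 x ^ 2) (a := 0) (b := 2 * π)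
    (by fun_prop) (fun x hx => by
      have h := ((hv x).pow 2).add ((hv1 x).pow 2)
      have h' : HasDerivAt (fun x => v x ^ 2 + v1 x ^ 2) 0 x := by
        refine h.congr_deriv ?_
        have := hz x (Ico_subset_Icc_self hx)
        push_cast
        linear_combination (2 * v1 x) * this
      exact h'.hasDerivWithinAt)
  intro x hx
  have := hk x hx
  simp only [a0, a1] at this
  nlinarith [sq_nonneg (v x), sq_nonneg (v1 x)]


lemma energy (e k L μ : ℝ) (he : 0 < e) (he1 : e < 1 / 2) (hk : 0 < k) (hkL : k * sin (e * π) = L)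
    (u y : ℝ → ℝ) (hy : ∀ t, y t = e * sqrt (k ^ 2 - (t - L) ^ 2)) (hu : ContDiff ℝ 4 u)
    (hode : ∀ s ∈ Ioo (0:ℝ) (2 * L), deriv (deriv fun t => 2 * y t ^ 3 * deriv (deriv u) t) s +
      μ * deriv (fun t => 2 * y t * deriv u t) s + 2 * e ^ 2 * (1 / y s) * u s = 0)
    (h0 : u 0 = 0) (h2 : u (2 * L) = 0)
    (hd0 : deriv u 0 = 0) (hd2 : deriv u (2 * L) = 0) (hμ : μ ≤ 1) :
    ∀ x ∈ Icc 0 (2 * π), u (L + k * sin (e * (x - π))) = 0 := by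
  have hpi := pi_pos
  obtain ⟨S, hS⟩ : ∃ S : ℝ → ℝ, ∀ x, S x = L + k * sin (e * (x - π)) := ⟨_, fun _ => rfl⟩
  obtain ⟨Y, hY⟩ : ∃ Y : ℝ → ℝ, ∀ x, Y x = e * k * cos (e * (x - π)) := ⟨_, fun _ => rfl⟩
  obtain ⟨Z, hZ⟩ : ∃ Z : ℝ → ℝ, ∀ x, Z x = -(e ^ 2 * k * sin (e * (x - π))) := ⟨_, fun _ => rfl⟩
  obtain ⟨G, hG⟩ : ∃ G : ℝ → ℝ, G = fun t => 2 * y t ^ 3 * deriv (deriv u) t := ⟨_, rfl⟩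
  obtain ⟨W, hW⟩ : ∃ W : ℝ → ℝ, W = fun t => 2 * y t * deriv u t := ⟨_, rfl⟩
  rw [← hG, ← hW] at hode
  have c1 : ContDiff ℝ 3 (deriv u) := ContDiff.deriv' (hu.of_le (by norm_num))
  have c2 : ContDiff ℝ 2 (deriv (deriv u)) := ContDiff.deriv' (c1.of_le (by norm_num))
  have d0 : ∀ t, HasDerivAt u (deriv u t) t := fun t =>
    (hu.differentiable (by norm_num) t).hasDerivAt
  have d1 : ∀ t, HasDerivAt (deriv u) (deriv (deriv u) t) t := fun t =>
    (c1.differentiable (by norm_num) t).hasDerivAt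
  have hlin : ∀ x, HasDerivAt (fun x => e * (x - π)) e x := fun x => by
    simpa using ((hasDerivAt_id x).sub_const π).const_mul e
  have dS : ∀ x, HasDerivAt S (Y x) x := fun x => by
    rw [show S = _ from funext hS, hY]
    exact ((((hlin x).sin).const_mul k).const_add L).congr_deriv (by ring)
  have dY : ∀ x, HasDerivAt Y (Z x) x := fun x => by
    rw [show Y = _ from funext hY, hZ]
    exact (((hlin x).cos).const_mul (e * k)).congr_deriv (by ring)
  have cS : Continuous S := continuous_iff_continuousAt.2 fun x => (dS x).continuousAt
  have cY : Continuous Y := continuous_iff_continuousAt.2 fun x => (dY x).continuousAt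
  have cZ : Continuous Z := by rw [show Z = _ from funext hZ]; fun_prop
  have S0 : S 0 = 0 := by
    rw [hS, show e * (0 - π) = -(e * π) by ring, sin_neg]; linarith
  have S2 : S (2 * π) = 2 * L := by
    rw [hS, show e * (2 * π - π) = (e * π) by ring]; linarith
  have lo : ∀ x ∈ Icc 0 (2 * π), -(π / 2) < e * (x - π) ∧ e * (x - π) < π / 2 := by
    rintro x ⟨h1, h2⟩
    constructor <;> nlinarith
  have cpos : ∀ x ∈ Icc 0 (2 * π), 0 < cos (e * (x - π)) := fun x hx =>
    cos_pos_of_mem_Ioo ⟨(lo x hx).1, (lo x hx).2⟩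
  have sq : ∀ x, k ^ 2 - (S x - L) ^ 2 = (k * cos (e * (x - π))) ^ 2 := fun x => by
    rw [hS]; have := sin_sq_add_cos_sq (e * (x - π)); linear_combination (-k ^ 2) * this
  have yS : ∀ x ∈ Icc 0 (2 * π), y (S x) = Y x := fun x hx => by
    have := cpos x hx
    rw [hy, sq, sqrt_sq (by positivity), hY]; ring
  have Smem : ∀ x ∈ Ioo 0 (2 * π), S x ∈ Ioo 0 (2 * L) := by
    intro x hx
    have z0 : (0:ℝ) ∈ Icc 0 (2 * π) := ⟨le_rfl, by positivity⟩
    have z2 : (2 * π:ℝ) ∈ Icc 0 (2 * π) := ⟨by positivity, le_rfl⟩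
    have hx' := lo x (Ioo_subset_Icc_self hx)
    have l0 := lo _ z0
    have l2 := lo _ z2
    rw [← S0, ← S2]
    constructor
    · rw [hS, hS]
      have := strictMonoOn_sin ⟨l0.1.le, l0.2.le⟩ ⟨hx'.1.le, hx'.2.le⟩
        (by have := hx.1; gcongr : e * (0 - π) < e * (x - π))
      gcongr
    · rw [hS, hS]
      have := strictMonoOn_sin ⟨hx'.1.le, hx'.2.le⟩ ⟨l2.1.le, l2.2.le⟩
        (by have := hx.2; gcongr : e * (x - π) < e * (2 * π - π))
      gcongr
  have ySm : ∀ x ∈ Icc 0 (2 * π), ContDiffAt ℝ 2 y (S x) := fun x hx => by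
    have := cpos x hx
    rw [show y = _ from funext hy]
    refine contDiffAt_const.mul (ContDiffAt.sqrt (by fun_prop) ?_)
    rw [sq]; positivity
  have Gs : ∀ x ∈ Icc 0 (2 * π), ContDiffAt ℝ 2 G (S x) := fun x hx => by
    rw [hG]
    exact (contDiffAt_const.mul ((ySm x hx).pow 3)).mul c2.contDiffAt
  have Ws : ∀ x ∈ Icc 0 (2 * π), ContDiffAt ℝ 1 W (S x) := fun x hx => by
    rw [hW]
    exact (contDiffAt_const.mul ((ySm x hx).of_le (by norm_num))).mul (c1.contDiffAt.of_le (by norm_num))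
  have G0 : ∀ x ∈ Icc 0 (2 * π), HasDerivAt G (deriv G (S x)) (S x) := fun x hx =>
    ((Gs x hx).differentiableAt (by norm_num)).hasDerivAt
  have G1 : ∀ x ∈ Icc 0 (2 * π), HasDerivAt (deriv G) (deriv (deriv G) (S x)) (S x) := fun x hx =>
    (((Gs x hx).derivWithin (m := 1) (by norm_num)).differentiableAt (by norm_num)).hasDerivAt
  have W0 : ∀ x ∈ Icc 0 (2 * π), HasDerivAt W (deriv W (S x)) (S x) := fun x hx =>
    ((Ws x hx).differentiableAt (by norm_num)).hasDerivAt
  have dv : ∀ x, HasDerivAt (fun x => u (S x)) (deriv u (S x) * Y x) x := fun x =>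
    (d0 (S x)).comp x (dS x)
  have dv1 : ∀ x, HasDerivAt (fun x => deriv u (S x)) (deriv (deriv u) (S x) * Y x) x := fun x =>
    (d1 (S x)).comp x (dS x)
  have dw : ∀ x, HasDerivAt (fun x => deriv u (S x) * Y x)
      (deriv (deriv u) (S x) * Y x * Y x + deriv u (S x) * Z x) x := fun x => (dv1 x).mul (dY x)
  have cu0 := hu.continuous
  have cu1 := c1.continuous
  have cu2 := c2.continuous
  have dP : ∀ x ∈ Icc 0 (2 * π), HasDerivAt (fun x => deriv G (S x) * u (S x)
        - G (S x) * deriv u (S x) + μ * (W (S x) * u (S x))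
        + 2 * e * (tan (e * (x - π)) * (deriv u (S x) * Y x) ^ 2))
      (Y x * (u (S x) * (deriv (deriv G) (S x) + μ * deriv W (S x)) - 2 * Y x ^ 3 * deriv (deriv u) (S x) ^ 2
        + 2 * μ * Y x * deriv u (S x) ^ 2) + 2 * e * (e / cos (e * (x - π)) ^ 2 * (deriv u (S x) * Y x) ^ 2
        + tan (e * (x - π)) * (2 * (deriv u (S x) * Y x) *
          (deriv (deriv u) (S x) * Y x * Y x + deriv u (S x) * Z x)))) x := by
    intro x hx
    have e1 : HasDerivAt (fun x => deriv G (S x)) (deriv (deriv G) (S x) * Y x) x := (G1 x hx).comp x (dS x)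
    have e2 : HasDerivAt (fun x => G (S x)) (deriv G (S x) * Y x) x := (G0 x hx).comp x (dS x)
    have e3 : HasDerivAt (fun x => W (S x)) (deriv W (S x) * Y x) x := (W0 x hx).comp x (dS x)
    have e4 : HasDerivAt (fun x => tan (e * (x - π))) (1 / cos (e * (x - π)) ^ 2 * e) x :=
      HasDerivAt.comp (h₂ := tan) x (Real.hasDerivAt_tan (cpos x hx).ne') (hlin x)
    have := (((e1.mul (dv x)).sub (e2.mul (dv1 x))).add ((e3.mul (dv x)).const_mul μ)).add
      ((e4.mul ((dw x).pow 2)).const_mul (2 * e))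
    refine this.congr_deriv ?_
    have g1 : G (S x) = 2 * Y x ^ 3 * deriv (deriv u) (S x) := by rw [hG, ← yS x hx]
    have g2 : W (S x) = 2 * Y x * deriv u (S x) := by rw [hW, ← yS x hx]
    rw [g1, g2]
    push_cast
    simp only [Pi.pow_apply]
    ring
  have I := intervalIntegral.integral_eq_sub_of_hasDerivAt_of_le
    (f' := fun x => (-2) * ((deriv (deriv u) (S x) * Y x * Y x + deriv u (S x) * Z x) ^ 2 + e ^ 2 * (u (S x)) ^ 2
      - (μ + e ^ 2) * (deriv u (S x) * Y x) ^ 2))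
    (by positivity : (0:ℝ) ≤ 2 * π) (fun x hx => (dP x hx).continuousAt.continuousWithinAt)
    (fun x hx => (dP x (Ioo_subset_Icc_self hx)).congr_deriv (by
      have hx' := Ioo_subset_Icc_self hx
      have o := hode _ (Smem x hx)
      rw [yS x hx'] at o
      have hcp := cpos x hx'
      have Yp : 0 < Y x := by rw [hY]; positivity
      have o' : deriv (deriv G) (S x) + μ * deriv W (S x) = - (2 * e ^ 2 * (1 / Y x) * u (S x)) := by
        linarith
      rw [o', tan_eq_sin_div_cos]
      have hcs := sin_sq_add_cos_sq (e * (x - π))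
      have hY' := hY x
      have hZ' := hZ x
      generalize sin (e * (x - π)) = sn at *
      generalize cos (e * (x - π)) = cs at *
      generalize Y x = yy at *
      generalize Z x = zz at *
      generalize u (S x) = a at *
      generalize deriv u (S x) = b at *
      generalize deriv (deriv u) (S x) = c at *
      have q1 : yy * (a * -(2 * e ^ 2 * (1 / yy) * a) - 2 * yy ^ 3 * c ^ 2 + 2 * μ * yy * b ^ 2) =
        - 2 * e ^ 2 * a ^ 2 - 2 * yy ^ 4 * c ^ 2 + 2 * μ * yy ^ 2 * b ^ 2 := by field_simp
      rw [q1, hY', hZ']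
      field_simp
      linear_combination (-(e ^ 2 * k ^ 2 * b ^ 2)) * hcs))
    (by apply Continuous.intervalIntegrable; fun_prop)
  rw [intervalIntegral.integral_const_mul] at I
  simp only [S0, S2, h0, h2, hd0, hd2] at I
  have R := core (fun x => u (S x)) _ _ dv dw (by fun_prop) e μ he (by linarith) hμ
    (by simp [S0, h0]) (by simp [S2, h2]) (by simp [S0, hd0]) (by simp [S2, hd2]) (by linarith)
  intro x hx
  rw [← hS]
  exact R x hx

/-- any nontrivial `C⁴` solution of the stability boundary value problem with
`μ > 0` forces `μ > 1`. -/
theorem statement17 (x0 L μ : ℝ) (hx0 : 0 < x0) (hL : 3 * x0 < L) (hμ : 0 < μ)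
    (u : ℝ → ℝ) (hu : ContDiff ℝ 4 u)
    (hne : ∃ s ∈ Set.Icc (0:ℝ) (2 * L), u s ≠ 0)
    (hode : ∀ s ∈ Set.Ioo (0:ℝ) (2 * L), Lop x0 L μ u s = 0)
    (h0 : u 0 = 0) (h2 : u (2 * L) = 0)
    (hd0 : deriv u 0 = 0) (hd2 : deriv u (2 * L) = 0) :
    1 < μ := by
  by_contra! hμ1
  have hpi := pi_pos
  have hLp : 0 < L := by linarith
  obtain ⟨e, hedef⟩ : ∃ e, e = Real.sqrt (x0 / (L + x0)) := ⟨_, rfl⟩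
  have hq : 0 < x0 / (L + x0) := by positivity
  have he : 0 < e := by rw [hedef]; exact sqrt_pos.2 hq
  have he2 : e ^ 2 = x0 / (L + x0) := by rw [hedef, sq_sqrt hq.le]
  have he1 : e < 1 / 2 := by
    have : x0 / (L + x0) < 1 / 4 := by rw [div_lt_div_iff₀ (by positivity) (by norm_num)]; linarith
    nlinarith
  have hsig : sig x0 L = e * π := by rw [sig, hedef]; ring
  have hsin : 0 < sin (e * π) := sin_pos_of_pos_of_lt_pi (by positivity) (by nlinarith)
  obtain ⟨k, hkdef⟩ : ∃ k, k = kap x0 L := ⟨_, rfl⟩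
  have hk' : k = L / sin (e * π) := by rw [hkdef, kap, hsig]
  have hk : 0 < k := by rw [hk']; positivity
  have hkL : k * sin (e * π) = L := by rw [hk']; field_simp
  obtain ⟨y, hy⟩ : ∃ y : ℝ → ℝ, ∀ t, y t = e * sqrt (k ^ 2 - (t - L) ^ 2) := ⟨_, fun _ => rfl⟩
  have hH : ∀ t, Hc x0 L t = 1 / y t := fun t => by
    rw [Hc, hsig, ← hkdef, hy, show e * π * √(k ^ 2 - (t - L) ^ 2) = π * (e * √(k ^ 2 - (t - L) ^ 2)) by ring,
      ← div_div, div_self hpi.ne']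
  have key := energy e k L μ he he1 hk hkL u y hy hu (fun s hs => by
    have h := hode s hs
    rw [Lop] at h
    simp only [hH] at h
    have c : 2 - 2 * L / (L + x0) = 2 * e ^ 2 := by rw [he2]; field_simp; ring
    rw [c] at h
    simpa [div_eq_mul_inv] using h) h0 h2 hd0 hd2 hμ1
  obtain ⟨s, hs, hus⟩ := hne
  have iv := intermediate_value_Icc (f := fun x => L + k * sin (e * (x - π)))
    (by positivity : (0:ℝ) ≤ 2 * π) (by fun_prop)
  simp only [show e * (0 - π) = -(e * π) by ring, show e * (2 * π - π) = e * π by ring, sin_neg,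
    mul_neg, hkL] at iv
  obtain ⟨x, hx, hxs⟩ := iv (show s ∈ Icc (L + -L) (L + L) from ⟨by linarith [hs.1], by linarith [hs.2]⟩)
  apply hus
  rw [← hxs]
  exact key x hx
end

section
/- Fix x₀ > 0 and L > 3x₀ and let H, λ be the associated critical data. There exists a constant C > 0 (depending only on x₀ and L) such that for every φ ∈ C²([0,2L], ℝ) with φ(0) = φ(2L) = 0 and φ̇(0) = φ̇(2L) = 0 one has ∫₀^{2L} ((2−λ)H(s)φ(s)² − 2φ̇(s)²/H(s) + 2φ̈(s)²/H(s)³) ds ≥ C·∫₀^{2L} (φ(s)² + φ̇(s)² + φ̈(s)²) ds. -/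
open Real Set

open MeasureTheory intervalIntegral in
lemma wirtinger_aux (g g' : ℝ → ℝ) (hg : ∀ t, HasDerivAt g (g' t) t) (hg' : Continuous g')
    (hper : g (-π) = g π) (hmean : ∫ t in (-π)..π, g t = 0) :
    ∫ t in (-π)..π, g t ^ 2 ≤ ∫ t in (-π)..π, g' t ^ 2 := by
  have hab : -π < π := by linarith [Real.pi_pos]
  have hgc : Continuous g := continuous_iff_continuousAt.2 fun t => (hg t).continuousAt
  have key : ∀ u : ℝ → ℝ, Continuous u →
      HasSum (fun i => ‖fourierCoeffOn hab (fun t => (u t : ℂ)) i‖ ^ 2)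
        ((π - -π)⁻¹ * ∫ x in (-π)..π, u x ^ 2) := by
    intro u hu
    have hm : MemLp (fun t => (u t : ℂ)) 2 (volume.restrict (Ioc (-π) π)) := by
      have hcu : Continuous (fun t => (u t : ℂ)) := Complex.continuous_ofReal.comp hu
      have h1 : MemLp (fun t => (u t : ℂ)) ⊤ (volume.restrict (Ioc (-π) π)) := by
        obtain ⟨C, hC⟩ := (isCompact_Icc (a := -π) (b := π)).exists_bound_of_continuousOn
          hcu.continuousOn
        refine memLp_top_of_bound hcu.aestronglyMeasurable C ?_
        filter_upwards [ae_restrict_mem measurableSet_Ioc] with x hx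
        exact hC x (Ioc_subset_Icc_self hx)
      exact h1.mono_exponent le_top
    have := hasSum_sq_fourierCoeffOn hab hm
    simpa using this
  have h1 := key g hgc
  have h2 := key g' hg'
  have hle := hasSum_le (fun i => ?_) h1 h2
  · have : 0 < (π - -π)⁻¹ := by
      apply inv_pos.2; linarith
    exact le_of_mul_le_mul_left hle this
  · by_cases hi : i = 0
    · subst hi
      have : fourierCoeffOn hab (fun t => (g t : ℂ)) 0 = 0 := by
        rw [fourierCoeffOn_eq_integral]
        simp [intervalIntegral.integral_ofReal, hmean]
      rw [this]; simp
    · have hc : Continuous (fun t => (g' t : ℂ)) := Complex.continuous_ofReal.comp hg'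
      have := fourierCoeffOn_of_hasDerivAt hab (f := fun t => (g t : ℂ))
        (f' := fun t => (g' t : ℂ)) hi (fun x _ => (hg x).ofReal_comp) (hc.intervalIntegrable _ _)
      rw [this, hper]
      have hi' : (1:ℝ) ≤ |(i:ℝ)| := by
        exact_mod_cast Int.one_le_abs hi
      have hn : ‖(1 / (-2 * (π:ℂ) * Complex.I * i)) * (((π:ℝ):ℂ) - ((-π:ℝ):ℂ))‖ ≤ 1 := by
        have : (((π:ℝ):ℂ) - ((-π:ℝ):ℂ)) = 2 * π := by push_cast; ring
        rw [this]
        simp only [norm_mul, norm_div, norm_neg, Complex.norm_I, Complex.norm_real, norm_one,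
          Complex.norm_intCast, Complex.norm_ofNat, Real.norm_eq_abs, abs_of_pos Real.pi_pos]
        have hp := Real.pi_pos
        rw [div_mul_eq_mul_div, div_le_one (by positivity)]
        nlinarith
      have e : ‖1 / (-2 * (π:ℂ) * Complex.I * i) *
          (fourier (-i) ((-π : ℝ) : AddCircle (π - -π)) * ((g π : ℂ) - (g π : ℂ)) -
            (((π:ℝ):ℂ) - ((-π:ℝ):ℂ)) * fourierCoeffOn hab (fun t => (g' t : ℂ)) i)‖ ≤
          ‖fourierCoeffOn hab (fun t => (g' t : ℂ)) i‖ := by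
        rw [sub_self, mul_zero, zero_sub, mul_neg, norm_neg, ← mul_assoc, norm_mul]
        exact mul_le_of_le_one_left (norm_nonneg _) hn
      gcongr

lemma energy_aux : ∃ K > (0:ℝ), ∀ f f1 f2 : ℝ → ℝ, (∀ t, HasDerivAt f (f1 t) t) →
    (∀ t, HasDerivAt f1 (f2 t) t) → Continuous f2 → f (-π) = 0 → f π = 0 → f1 (-π) = 0 →
    f1 π = 0 →
    ∫ t in (-π)..π, (f t ^ 2 + f1 t ^ 2 + f2 t ^ 2) ≤ K * ∫ t in (-π)..π, (f t + f2 t) ^ 2 := by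
  refine ⟨2 + 2 * (6 * exp π) * exp π, by positivity, ?_⟩
  intro f f1 f2 hf hf1 hc2 a1 a2 a3 a4
  have hp := Real.pi_pos
  have hc : Continuous f := continuous_iff_continuousAt.2 fun t => (hf t).continuousAt
  have hc1 : Continuous f1 := continuous_iff_continuousAt.2 fun t => (hf1 t).continuousAt
  have hz : ∫ t in (-π)..π, exp (-t) * (2 * f1 t * (f t + f2 t) - f t ^ 2 - f1 t ^ 2) = 0 := by
    rw [intervalIntegral.integral_eq_sub_of_hasDerivAt (f := fun t => exp (-t) * (f t ^ 2 + f1 t ^ 2))]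
    · simp [a1, a2, a3, a4]
    · intro t _
      have h0 : HasDerivAt (fun t : ℝ => exp (-t)) (-exp (-t)) t := by
        simpa using (hasDerivAt_neg t).exp
      refine (h0.mul (((hf t).pow 2).add ((hf1 t).pow 2))).congr_deriv ?_
      simp only [Pi.add_apply, Pi.pow_apply]
      push_cast; ring
    · exact Continuous.intervalIntegrable (by fun_prop) _ _
  have hm : ∫ t in (-π)..π, (f t ^ 2 + f1 t ^ 2 + f2 t ^ 2) ≤
      ∫ t in (-π)..π, ((2 + 2 * (6 * exp π) * exp π) * (f t + f2 t) ^ 2 -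
        (6 * exp π) * (exp (-t) * (2 * f1 t * (f t + f2 t) - f t ^ 2 - f1 t ^ 2))) := by
    apply intervalIntegral.integral_mono_on (by linarith)
    · exact Continuous.intervalIntegrable (by fun_prop) _ _
    · exact Continuous.intervalIntegrable (by fun_prop) _ _
    · intro t ht
      have e1 : 1 ≤ exp π * exp (-t) := by
        rw [← Real.exp_add]; exact Real.one_le_exp (by linarith [ht.2])
      have e2 : exp (-t) ≤ exp π := Real.exp_le_exp.2 (by linarith [ht.1])
      have e3 : exp π * exp (-t) ≤ exp π * exp π := by gcongr
      have q1 : 0 ≤ (exp π * exp (-t) - 1) * (f t ^ 2 + f1 t ^ 2) :=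
        mul_nonneg (by linarith) (by positivity)
      have q2 : 0 ≤ (exp π * exp π - exp π * exp (-t)) * (f t + f2 t) ^ 2 :=
        mul_nonneg (by linarith) (by positivity)
      have q3 : 0 ≤ (exp π * exp (-t)) * (f t ^ 2 + (f1 t - 2 * (f t + f2 t)) ^ 2) := by positivity
      nlinarith [sq_nonneg (f2 t + 2 * f t), sq_nonneg (f1 t)]
  refine hm.trans ?_
  rw [intervalIntegral.integral_sub, intervalIntegral.integral_const_mul,
    intervalIntegral.integral_const_mul, hz]
  · simp
  · exact Continuous.intervalIntegrable (by fun_prop) _ _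
  · exact Continuous.intervalIntegrable (by fun_prop) _ _

/-- lower bound for the transformed form -/
lemma coer_aux (a : ℝ) (ha : 0 < a) (ha1 : a < 1) : ∃ K > (0:ℝ), ∀ f f1 f2 B B1 : ℝ → ℝ,
    (∀ t, HasDerivAt f (f1 t) t) →
    (∀ t, HasDerivAt f1 (f2 t) t) → (∀ t, HasDerivAt B (B1 t) t) → Continuous f2 →
    Continuous B1 → f (-π) = 0 → f π = 0 → f1 (-π) = 0 → f1 π = 0 → B (-π) = 0 → B π = 0 →
    K * ∫ t in (-π)..π, (f t ^ 2 + f1 t ^ 2 + f2 t ^ 2) ≤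
      ∫ t in (-π)..π, 2 * (a ^ 2 * f t ^ 2 - f1 t ^ 2 + f2 t ^ 2 - a ^ 2 * f1 t ^ 2 + B1 t) := by
  obtain ⟨K, hK, h⟩ := energy_aux
  refine ⟨2 * a ^ 2 / K, by positivity, ?_⟩
  intro f f1 f2 B B1 hf hf1 hB hc2 hcB a1 a2 a3 a4 b1 b2
  have hc : Continuous f := continuous_iff_continuousAt.2 fun t => (hf t).continuousAt
  have hc1 : Continuous f1 := continuous_iff_continuousAt.2 fun t => (hf1 t).continuousAt
  have h0 := h f f1 f2 hf hf1 hc2 a1 a2 a3 a4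
  have hw := wirtinger_aux f1 f2 hf1 hc2 (by rw [a3, a4]) (by
    rw [intervalIntegral.integral_eq_sub_of_hasDerivAt (f := f) (fun t _ => hf t)
      (hc1.intervalIntegrable _ _), a1, a2, sub_zero])
  have hz : ∫ t in (-π)..π, (B1 t - 2 * a ^ 2 * (f1 t * f1 t + f t * f2 t)) = 0 := by
    rw [intervalIntegral.integral_eq_sub_of_hasDerivAt
      (f := fun t => B t - 2 * a ^ 2 * (f t * f1 t))]
    · simp [a1, a2, b1, b2]
    · intro t _
      exact (hB t).sub (((hf t).mul (hf1 t)).const_mul _)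
    · exact Continuous.intervalIntegrable (by fun_prop) _ _
  have hI : ∫ t in (-π)..π, 2 * (a ^ 2 * f t ^ 2 - f1 t ^ 2 + f2 t ^ 2 - a ^ 2 * f1 t ^ 2 + B1 t)
      = 2 * a ^ 2 * (∫ t in (-π)..π, (f t + f2 t) ^ 2) + 2 * (1 - a ^ 2) *
        ((∫ t in (-π)..π, f2 t ^ 2) - ∫ t in (-π)..π, f1 t ^ 2)
        + 2 * ∫ t in (-π)..π, (B1 t - 2 * a ^ 2 * (f1 t * f1 t + f t * f2 t)) := by
    rw [← intervalIntegral.integral_sub, ← intervalIntegral.integral_const_mul,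
      ← intervalIntegral.integral_const_mul, ← intervalIntegral.integral_const_mul,
      ← intervalIntegral.integral_add, ← intervalIntegral.integral_add]
    · congr 1; ext t; ring
    all_goals exact Continuous.intervalIntegrable (by fun_prop) _ _
  rw [hI, hz]
  have h1 : 0 ≤ 2 * (1 - a ^ 2) *
        ((∫ t in (-π)..π, f2 t ^ 2) - ∫ t in (-π)..π, f1 t ^ 2) :=
    mul_nonneg (by nlinarith) (by linarith)
  have h2 : 2 * a ^ 2 / K * ∫ t in (-π)..π, (f t ^ 2 + f1 t ^ 2 + f2 t ^ 2) ≤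
      2 * a ^ 2 / K * (K * ∫ t in (-π)..π, (f t + f2 t) ^ 2) := by gcongr
  have h3 : 2 * a ^ 2 / K * (K * ∫ t in (-π)..π, (f t + f2 t) ^ 2) =
      2 * a ^ 2 * ∫ t in (-π)..π, (f t + f2 t) ^ 2 := by field_simp
  linarith

lemma pt_aux (k a c0 c n p q r : ℝ) (hk0 : 0 < k) (ha : 0 < a) (hc0 : 0 < c0) (hct : c0 ≤ c)
    (hc1 : c ≤ 1) (hss : n ^ 2 + c ^ 2 = 1) :
    (p ^ 2 + q ^ 2 + r ^ 2) * (k * a * c) ≤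
      (k * a + 1 / (k * a * c0) + 2 * (1 + a ^ 2 / c0 ^ 2) / (k * a * c0) ^ 3) *
        (p ^ 2 + (q * (k * a * c)) ^ 2 +
          (r * k ^ 2 * a ^ 2 * c ^ 2 - q * k * a ^ 2 * n) ^ 2) := by
  have hcp : 0 < c := hc0.trans_le hct
  have hn : n ^ 2 ≤ 1 := by nlinarith
  obtain ⟨u, hu⟩ : ∃ u, u = q * (k * a * c) := ⟨_, rfl⟩
  obtain ⟨v, hv⟩ : ∃ v, v = r * k ^ 2 * a ^ 2 * c ^ 2 - q * k * a ^ 2 * n := ⟨_, rfl⟩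
  have e1 : q ^ 2 * (k * a * c) = u ^ 2 * (1 / (k * a * c)) := by
    rw [hu]; field_simp
  have e2 : r ^ 2 * (k * a * c) = (v + a * n / c * u) ^ 2 * (1 / (k * a * c) ^ 3) := by
    rw [hu, hv]; field_simp; ring
  have i1 : 1 / (k * a * c) ≤ 1 / (k * a * c0) := by gcongr
  have i2 : 1 / (k * a * c) ^ 3 ≤ 1 / (k * a * c0) ^ 3 := by gcongr
  have i3 : (v + a * n / c * u) ^ 2 ≤ 2 * (1 + a ^ 2 / c0 ^ 2) * (u ^ 2 + v ^ 2) := by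
    have j1 : (v + a * n / c * u) ^ 2 ≤ 2 * v ^ 2 + 2 * (a * n / c * u) ^ 2 := by
      nlinarith [sq_nonneg (v - a * n / c * u)]
    have j2 : (a * n / c * u) ^ 2 ≤ a ^ 2 / c0 ^ 2 * u ^ 2 := by
      have : (a * n / c * u) ^ 2 = a ^ 2 * n ^ 2 / c ^ 2 * u ^ 2 := by field_simp
      rw [this]
      have : a ^ 2 * n ^ 2 ≤ a ^ 2 := by nlinarith [sq_nonneg a]
      gcongr
    have j3 : 0 ≤ a ^ 2 / c0 ^ 2 * v ^ 2 := by positivity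
    nlinarith [sq_nonneg u]
  have f1 : p ^ 2 * (k * a * c) ≤ k * a * p ^ 2 := by
    have : 0 ≤ k * a * p ^ 2 * (1 - c) := mul_nonneg (by positivity) (by linarith)
    nlinarith
  have f2 : q ^ 2 * (k * a * c) ≤ 1 / (k * a * c0) * (u ^ 2 + v ^ 2) := by
    rw [e1, mul_comm]
    exact mul_le_mul i1 (by nlinarith [sq_nonneg v]) (by positivity) (by positivity)
  have f3 : r ^ 2 * (k * a * c) ≤ 2 * (1 + a ^ 2 / c0 ^ 2) / (k * a * c0) ^ 3 * (u ^ 2 + v ^ 2) := by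
    rw [e2]
    calc _ ≤ (2 * (1 + a ^ 2 / c0 ^ 2) * (u ^ 2 + v ^ 2)) * (1 / (k * a * c0) ^ 3) :=
          mul_le_mul i3 i2 (by positivity) (by positivity)
      _ = _ := by ring
  rw [← hu, ← hv]
  have g1 : 0 ≤ k * a * (u ^ 2 + v ^ 2) := by positivity
  have g2 : 0 ≤ 1 / (k * a * c0) * p ^ 2 := by positivity
  have g3 : 0 ≤ 2 * (1 + a ^ 2 / c0 ^ 2) / (k * a * c0) ^ 3 * p ^ 2 := by positivity
  linarith

/-- coercivity of the second variation of `F − λA` at the critical configuration,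
with `λ = 2L/(L+x₀)`. -/
theorem statement18 (x0 L : ℝ) (hx0 : 0 < x0) (hL : 3 * x0 < L) :
    ∃ C > (0:ℝ), ∀ φ : ℝ → ℝ, ContDiff ℝ 2 φ →
      φ 0 = 0 → φ (2 * L) = 0 → deriv φ 0 = 0 → deriv φ (2 * L) = 0 →
      (∫ s in (0:ℝ)..(2 * L),
          ((2 - 2 * L / (L + x0)) * Hc x0 L s * φ s ^ 2 -
            2 * deriv φ s ^ 2 / Hc x0 L s +
            2 * deriv (deriv φ) s ^ 2 / Hc x0 L s ^ 3)) ≥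
        C * ∫ s in (0:ℝ)..(2 * L),
          (φ s ^ 2 + deriv φ s ^ 2 + deriv (deriv φ) s ^ 2) := by
  have hp := Real.pi_pos
  have hLp : 0 < L := by linarith
  obtain ⟨a, hadef⟩ : ∃ a, a = Real.sqrt (x0 / (L + x0)) := ⟨_, rfl⟩
  have hm0 : 0 < x0 / (L + x0) := by positivity
  have ha : 0 < a := by rw [hadef]; exact Real.sqrt_pos.2 hm0
  have ha2 : a ^ 2 = x0 / (L + x0) := by rw [hadef]; exact Real.sq_sqrt hm0.le
  have ha4 : a ^ 2 < 1 / 4 := by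
    rw [ha2, div_lt_div_iff₀ (by positivity) (by norm_num)]; linarith
  have hah : a < 1 / 2 := by nlinarith
  have hsig : sig x0 L = a * π := by rw [sig, ← hadef, mul_comm]
  have hs1 : 0 < a * π := by positivity
  have hs2 : a * π < π / 2 := by nlinarith
  have hsin : 0 < Real.sin (a * π) := Real.sin_pos_of_pos_of_lt_pi hs1 (by linarith)
  obtain ⟨k, hkdef⟩ : ∃ k, k = kap x0 L := ⟨_, rfl⟩
  have hk : k * Real.sin (a * π) = L := by
    rw [hkdef, kap, hsig]; field_simp
  have hk0 : 0 < k := by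
    rw [hkdef, kap, hsig]; positivity
  have hlam : 2 - 2 * L / (L + x0) = 2 * a ^ 2 := by
    rw [ha2]; field_simp; ring
  set c0 := Real.cos (a * π) with hc0def
  have hc0 : 0 < c0 := Real.cos_pos_of_mem_Ioo ⟨by linarith, hs2⟩
  have hcos : ∀ t ∈ Icc (-π) π, c0 ≤ Real.cos (a * t) := by
    intro t ht
    rw [← Real.cos_abs (a * t)]
    apply Real.cos_le_cos_of_nonneg_of_le_pi (abs_nonneg _) (by linarith)
    rw [abs_mul, abs_of_pos ha]
    gcongr
    exact abs_le.2 ht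
  have hH : ∀ t ∈ Icc (-π) π, Hc x0 L (L + k * Real.sin (a * t)) =
      1 / (a * (k * Real.cos (a * t))) := by
    intro t ht
    have hct := hc0.trans_le (hcos t ht)
    have : k ^ 2 - (L + k * Real.sin (a * t) - L) ^ 2 = (k * Real.cos (a * t)) ^ 2 := by
      have := Real.sin_sq_add_cos_sq (a * t)
      linear_combination (-k ^ 2) * this
    rw [Hc, ← hkdef, this, Real.sqrt_sq (by positivity), hsig]
    field_simp
  have hRpos : ∀ s ∈ Icc 0 (2 * L), 0 < k ^ 2 - (s - L) ^ 2 := by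
    intro s hs
    have h1 : (s - L) ^ 2 ≤ L ^ 2 := by nlinarith [hs.1, hs.2]
    have h2 : L ^ 2 < k ^ 2 := by
      rw [← hk]
      have := Real.sin_sq_add_cos_sq (a * π)
      have : 0 < k ^ 2 * c0 ^ 2 := by positivity
      nlinarith
    linarith
  have hHcont : ContinuousOn (Hc x0 L) (Icc 0 (2 * L)) := by
    unfold Hc
    rw [← hkdef, hsig]
    refine ContinuousOn.div continuousOn_const (by fun_prop) ?_
    intro s hs
    have := Real.sqrt_pos.2 (hRpos s hs)
    positivity
  have hHpos : ∀ s ∈ Icc 0 (2 * L), Hc x0 L s ≠ 0 := by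
    intro s hs
    have := Real.sqrt_pos.2 (hRpos s hs)
    unfold Hc
    rw [← hkdef, hsig]
    positivity
  have himg : (fun t => L + k * Real.sin (a * t)) '' (uIcc (-π) π) ⊆ Icc 0 (2 * L) := by
    rintro _ ⟨t, ht, rfl⟩
    rw [uIcc_of_le (by linarith)] at ht
    have h1 : Real.sin (a * t) ≤ Real.sin (a * π) :=
      Real.sin_le_sin_of_le_of_le_pi_div_two (by nlinarith [ht.1]) (by linarith) (by nlinarith [ht.2])
    have h2 : Real.sin (-(a * π)) ≤ Real.sin (a * t) :=
      Real.sin_le_sin_of_le_of_le_pi_div_two (by linarith) (by nlinarith [ht.2]) (by nlinarith [ht.1])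
    rw [Real.sin_neg] at h2
    constructor
    · show 0 ≤ L + k * Real.sin (a * t); nlinarith
    · show L + k * Real.sin (a * t) ≤ 2 * L; nlinarith
  have hy : ∀ t, HasDerivAt (fun t => L + k * Real.sin (a * t)) (k * a * Real.cos (a * t)) t := by
    intro t
    have := (((hasDerivAt_id' t).const_mul a).sin.const_mul k).const_add L
    refine this.congr_deriv ?_
    ring
  have hyc : Continuous (fun t => L + k * Real.sin (a * t)) := by fun_prop
  have hsub : ∀ F : ℝ → ℝ, ContinuousOn F (Icc 0 (2 * L)) → ∫ s in (0:ℝ)..(2 * L), F s =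
      ∫ t in (-π)..π, F (L + k * Real.sin (a * t)) * (k * a * Real.cos (a * t)) := by
    intro F hF
    have := intervalIntegral.integral_comp_mul_deriv'' (a := -π) (b := π)
      (f := fun t => L + k * Real.sin (a * t)) (f' := fun t => k * a * Real.cos (a * t)) (g := F)
      hyc.continuousOn (fun t _ => (hy t).hasDerivWithinAt)
      (by fun_prop) (hF.mono himg)
    simp only [Function.comp_def, mul_neg, Real.sin_neg, hk] at this
    rw [this]
    congr 1 <;> ring
  obtain ⟨K, hK, hcoer⟩ := coer_aux a ha (by linarith)
  obtain ⟨M, hMdef⟩ : ∃ M, M = k * a + 1 / (k * a * c0) + 2 * (1 + a ^ 2 / c0 ^ 2) / (k * a * c0) ^ 3 :=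
    ⟨_, rfl⟩
  have hM : 0 < M := by rw [hMdef]; positivity
  refine ⟨K / M, by positivity, ?_⟩
  intro φ hφ p0 p1 q0 q1
  have hφ1 : ContDiff ℝ 1 (deriv φ) := by
    have : ContDiff ℝ (1 + 1) φ := by simpa [one_add_one_eq_two] using hφ
    exact (contDiff_succ_iff_deriv.1 this).2.2
  have hφ2 : Continuous (deriv (deriv φ)) := hφ1.continuous_deriv le_rfl
  have d0 : ∀ s, HasDerivAt φ (deriv φ s) s := fun s =>
    (hφ.differentiable (by norm_num) s).hasDerivAt
  have d1 : ∀ s, HasDerivAt (deriv φ) (deriv (deriv φ) s) s := fun s =>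
    (hφ1.differentiable (by norm_num) s).hasDerivAt
  have hc0' : Continuous φ := hφ.continuous
  have hc1' : Continuous (deriv φ) := hφ1.continuous
  generalize deriv (deriv φ) = φ2 at *
  generalize deriv φ = φ1 at *
  rw [hsub _ (by
    refine ContinuousOn.add (ContinuousOn.sub ?_ ?_) ?_
    · exact (continuousOn_const.mul hHcont).mul (by fun_prop)
    · exact ContinuousOn.div (by fun_prop) hHcont hHpos
    · exact ContinuousOn.div (by fun_prop) (hHcont.pow 3) (fun s hs => pow_ne_zero _ (hHpos s hs)))]
  rw [hsub _ (by fun_prop)]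
  set y : ℝ → ℝ := fun t => L + k * Real.sin (a * t) with hydef
  have hyL : y (-π) = 0 := by simp [hydef, hk]
  have hyR : y π = 2 * L := by simp [hydef, hk]; ring
  have hcosd : ∀ t, HasDerivAt (fun t => Real.cos (a * t)) (-(a * Real.sin (a * t))) t := by
    intro t
    have := ((hasDerivAt_id' t).const_mul a).cos
    refine this.congr_deriv ?_
    ring
  have hsind : ∀ t, HasDerivAt (fun t => Real.sin (a * t)) (a * Real.cos (a * t)) t := by
    intro t
    have := ((hasDerivAt_id' t).const_mul a).sin
    refine this.congr_deriv ?_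
    ring
  have dp : ∀ t, HasDerivAt (fun t => φ (y t)) (φ1 (y t) * (k * a * Real.cos (a * t))) t :=
    fun t => (d0 (y t)).comp t (hy t)
  have dq : ∀ t, HasDerivAt (fun t => φ1 (y t)) (φ2 (y t) * (k * a * Real.cos (a * t))) t :=
    fun t => (d1 (y t)).comp t (hy t)
  have hmain := hcoer (fun t => φ (y t)) (fun t => φ1 (y t) * (k * a * Real.cos (a * t)))
    (fun t => φ2 (y t) * k ^ 2 * a ^ 2 * Real.cos (a * t) ^ 2 -
      φ1 (y t) * k * a ^ 2 * Real.sin (a * t))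
    (fun t => k ^ 2 * a ^ 3 * (Real.cos (a * t) * Real.sin (a * t) * φ1 (y t) ^ 2))
    (fun t => k ^ 2 * a ^ 3 * (a * (Real.cos (a * t) ^ 2 - Real.sin (a * t) ^ 2) * φ1 (y t) ^ 2 +
      Real.cos (a * t) * Real.sin (a * t) * (2 * φ1 (y t) *
        (φ2 (y t) * (k * a * Real.cos (a * t))))))
    dp (fun t => by
      refine ((dq t).mul ((hcosd t).const_mul (k * a))).congr_deriv ?_
      ring)
    (fun t => by
      refine ((((hcosd t).mul (hsind t)).mul ((dq t).pow 2)).const_mul (k ^ 2 * a ^ 3)).congr_deriv ?_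
      simp only [Pi.mul_apply, Pi.pow_apply]
      push_cast; ring)
    (by fun_prop) (by fun_prop)
    (by simp [hyL, p0]) (by simp [hyR, p1]) (by simp [hyL, q0]) (by simp [hyR, q1])
    (by simp [hyL, q0]) (by simp [hyR, q1])
  have hlhs : ∫ t in (-π)..π, ((2 - 2 * L / (L + x0)) * Hc x0 L (y t) * φ (y t) ^ 2 -
            2 * φ1 (y t) ^ 2 / Hc x0 L (y t) +
            2 * φ2 (y t) ^ 2 / Hc x0 L (y t) ^ 3) * (k * a * Real.cos (a * t)) =
      ∫ t in (-π)..π, 2 * (a ^ 2 * φ (y t) ^ 2 - (φ1 (y t) * (k * a * Real.cos (a * t))) ^ 2 +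
        (φ2 (y t) * k ^ 2 * a ^ 2 * Real.cos (a * t) ^ 2 -
          φ1 (y t) * k * a ^ 2 * Real.sin (a * t)) ^ 2 -
        a ^ 2 * (φ1 (y t) * (k * a * Real.cos (a * t))) ^ 2 +
        k ^ 2 * a ^ 3 * (a * (Real.cos (a * t) ^ 2 - Real.sin (a * t) ^ 2) * φ1 (y t) ^ 2 +
      Real.cos (a * t) * Real.sin (a * t) * (2 * φ1 (y t) *
        (φ2 (y t) * (k * a * Real.cos (a * t)))))) := by
    apply intervalIntegral.integral_congr
    intro t ht
    rw [uIcc_of_le (by linarith)] at ht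
    have hct := hc0.trans_le (hcos t ht)
    simp only
    rw [hH t ht, hlam]
    field_simp
    ring
  have hrhs : ∫ t in (-π)..π, (φ (y t) ^ 2 + φ1 (y t) ^ 2 + φ2 (y t) ^ 2) *
        (k * a * Real.cos (a * t)) ≤
      ∫ t in (-π)..π, M * (φ (y t) ^ 2 + (φ1 (y t) * (k * a * Real.cos (a * t))) ^ 2 +
        (φ2 (y t) * k ^ 2 * a ^ 2 * Real.cos (a * t) ^ 2 -
          φ1 (y t) * k * a ^ 2 * Real.sin (a * t)) ^ 2) := by
    apply intervalIntegral.integral_mono_on (by linarith)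
    · exact Continuous.intervalIntegrable (by fun_prop) _ _
    · exact Continuous.intervalIntegrable (by fun_prop) _ _
    · intro t ht
      have hct := hcos t ht
      have hc1 := Real.cos_le_one (a * t)
      have hss := Real.sin_sq_add_cos_sq (a * t)
      rw [hMdef]
      exact pt_aux k a c0 _ _ _ _ _ hk0 ha hc0 hct hc1 hss
  rw [intervalIntegral.integral_const_mul] at hrhs
  rw [ge_iff_le]
  calc _ ≤ K / M * (M * ∫ t in (-π)..π, (φ (y t) ^ 2 + (φ1 (y t) * (k * a * Real.cos (a * t))) ^ 2 +
        (φ2 (y t) * k ^ 2 * a ^ 2 * Real.cos (a * t) ^ 2 -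
          φ1 (y t) * k * a ^ 2 * Real.sin (a * t)) ^ 2)) :=
        mul_le_mul_of_nonneg_left hrhs (by positivity)
    _ = K * ∫ t in (-π)..π, (φ (y t) ^ 2 + (φ1 (y t) * (k * a * Real.cos (a * t))) ^ 2 +
        (φ2 (y t) * k ^ 2 * a ^ 2 * Real.cos (a * t) ^ 2 -
          φ1 (y t) * k * a ^ 2 * Real.sin (a * t)) ^ 2) := by
        rw [← mul_assoc, div_mul_cancel₀ _ hM.ne']
    _ ≤ _ := hmain
    _ = _ := hlhs.symm
end

section
/- Fix x₀ > 0 and L > 3x₀, let γ be the critical curve with curvature H and normal N = γ̇^⊥, and let λ = 2L/(L+x₀). There exists ε > 0 such that for every φ ∈ C²([0,2L], ℝ) with φ not identically zero, φ(0) = φ(2L) = 0, φ̇(0) = φ̇(2L) = 0, and sup_{s∈[0,2L]}(|φ(s)| + |φ̇(s)| + |φ̈(s)|) ≤ ε, the perturbed curve c = γ + φN satisfies ⟨ċ(s), c̈(s)^⊥⟩ > 0 for all s, and the strict inequality F(γ) − λ·A(γ) < F(c) − λ·A(c) holds. In particular, if A(c) = A(γ) then F(γ) < F(c). -/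
open Real Set

noncomputable def xc (x0 L s : ℝ) : ℝ :=
  -(kap x0 L / 2) *
    ((sig x0 L / (π + sig x0 L)) *
        Real.sin (((π + sig x0 L) / sig x0 L) * Real.arcsin ((s - L) / kap x0 L)) +
      (sig x0 L / (π - sig x0 L)) *
        Real.sin (((π - sig x0 L) / sig x0 L) * Real.arcsin ((s - L) / kap x0 L)))

noncomputable def yc (x0 L s : ℝ) : ℝ :=
  kap x0 L / 2 *
    ((sig x0 L / (π + sig x0 L)) *
        Real.cos (((π + sig x0 L) / sig x0 L) * Real.arcsin ((s - L) / kap x0 L)) +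
      (sig x0 L / (π - sig x0 L)) *
        Real.cos (((π - sig x0 L) / sig x0 L) * Real.arcsin ((s - L) / kap x0 L))) +
  π * x0 / (sig x0 L * Real.tan (sig x0 L))

/-- total inverse curvature `F(c) = ∫₀^{2L} |ċ|⁴/⟨ċ, c̈^⊥⟩ ds` of the plane curve `c = (u,v)`,
where `(a₁,a₂)^⊥ = (a₂,−a₁)` -/
noncomputable def Ffun (L : ℝ) (u v : ℝ → ℝ) : ℝ :=
  ∫ s in (0:ℝ)..(2 * L),
    (deriv u s ^ 2 + deriv v s ^ 2) ^ 2 /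
      (deriv u s * deriv (deriv v) s - deriv v s * deriv (deriv u) s)

/-- signed enclosed area `A(c) = (1/2)∫₀^{2L} ⟨c, ċ^⊥⟩ ds` of the plane curve `c = (u,v)` -/
noncomputable def Afun (L : ℝ) (u v : ℝ → ℝ) : ℝ :=
  1 / 2 * ∫ s in (0:ℝ)..(2 * L), (u s * deriv v s - v s * deriv u s)

/-- first component of the normal graph `c = γ + φN`, with `N = γ̇^⊥ = (ẏ, −ẋ)` -/
noncomputable def pc1 (x0 L : ℝ) (φ : ℝ → ℝ) (s : ℝ) : ℝ :=
  xc x0 L s + φ s * deriv (yc x0 L) s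

/-- second component of the normal graph `c = γ + φN` -/
noncomputable def pc2 (x0 L : ℝ) (φ : ℝ → ℝ) (s : ℝ) : ℝ :=
  yc x0 L s - φ s * deriv (xc x0 L) s

lemma tan_piece (η η1 : ℝ → ℝ) (h : ∀ x, HasDerivAt η (η1 x) x) (hc : Continuous η1)
    (c r p q m : ℝ) (hr0 : 0 < r) (hr1 : r < 1) (hpq : p ≤ q) (hp : m - π / 2 ≤ p) (hq : q ≤ m + π / 2) :
    r * tan (r * (p - m)) * (η p - c) ^ 2 - r * tan (r * (q - m)) * (η q - c) ^ 2 ≤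
      ∫ x in p..q, (η1 x ^ 2 - r ^ 2 * (η x - c) ^ 2) := by
  have hcη : Continuous η := continuous_iff_continuousAt.2 fun x => (h x).continuousAt
  have hcos : ∀ x ∈ Set.uIcc p q, 0 < cos (r * (x - m)) := by
    intro x hx
    rw [Set.uIcc_of_le hpq] at hx
    have := Real.pi_pos
    apply Real.cos_pos_of_mem_Ioo
    constructor
    · nlinarith [hx.1, hx.2]
    · nlinarith [hx.1, hx.2]
  have hd : ∀ x ∈ Set.uIcc p q, HasDerivAt (fun x => r * tan (r * (x - m)) * (η x - c) ^ 2)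
      ((r * (1 / cos (r * (x - m)) ^ 2 * r)) * (η x - c) ^ 2 +
        r * tan (r * (x - m)) * (2 * (η x - c) * η1 x)) x := by
    intro x hx
    have h1 : HasDerivAt (fun x => r * (x - m)) r x := by
      simpa using ((hasDerivAt_id x).sub_const m).const_mul r
    have h2 := ((Real.hasDerivAt_tan (hcos x hx).ne').comp x h1).const_mul r
    have h3 := ((h x).sub_const c).pow 2
    refine (h2.mul h3).congr_deriv ?_
    simp
  have hct : ContinuousOn (fun x => tan (r * (x - m))) (Set.uIcc p q) := by
    intro x hx
    apply ContinuousAt.continuousWithinAt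
    exact ContinuousAt.comp (f := fun x => r * (x - m)) (Real.continuousAt_tan.2 (hcos x hx).ne') (by fun_prop)
  have hc1 : ContinuousOn (fun x => ((r * (1 / cos (r * (x - m)) ^ 2 * r)) * (η x - c) ^ 2 +
        r * tan (r * (x - m)) * (2 * (η x - c) * η1 x))) (Set.uIcc p q) := by
    have : ∀ x ∈ Set.uIcc p q, cos (r * (x - m)) ^ 2 ≠ 0 := fun x hx => (pow_pos (hcos x hx) 2).ne'
    fun_prop (disch := assumption)
  have hF := intervalIntegral.integral_eq_sub_of_hasDerivAt hd hc1.intervalIntegrable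
  have hI : IntervalIntegrable (fun x => η1 x ^ 2 - r ^ 2 * (η x - c) ^ 2) MeasureTheory.volume p q :=
    Continuous.intervalIntegrable (by fun_prop) _ _
  have : 0 ≤ ∫ x in p..q, ((η1 x ^ 2 - r ^ 2 * (η x - c) ^ 2) + ((r * (1 / cos (r * (x - m)) ^ 2 * r)) * (η x - c) ^ 2 +
        r * tan (r * (x - m)) * (2 * (η x - c) * η1 x))) := by
    apply intervalIntegral.integral_nonneg hpq
    intro x hx
    have hx' := hcos x (by rwa [Set.uIcc_of_le hpq])
    have : (1 / cos (r * (x - m)) ^ 2) = 1 + tan (r * (x - m)) ^ 2 := by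
      rw [Real.tan_eq_sin_div_cos]; field_simp; linarith [Real.sin_sq_add_cos_sq (r * (x - m))]
    rw [this]
    nlinarith [sq_nonneg (η1 x + r * tan (r * (x - m)) * (η x - c))]
  rw [intervalIntegral.integral_add hI hc1.intervalIntegrable, hF] at this
  linarith

lemma wirtinger (η η1 : ℝ → ℝ) (h : ∀ x, HasDerivAt η (η1 x) x) (hc : Continuous η1)
    (h0 : η (-π) = 0) (h1 : η π = 0) (hm : ∫ x in (-π)..π, η x = 0) :
    ∫ x in (-π)..π, η x ^ 2 ≤ ∫ x in (-π)..π, η1 x ^ 2 := by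
  have hcη : Continuous η := continuous_iff_continuousAt.2 fun x => (h x).continuousAt
  have hpi := Real.pi_pos
  obtain ⟨a, ha, hae⟩ : ∃ a ∈ Set.Icc (-π) 0, η (a + π) - η a = 0 := by
    have hcg : ContinuousOn (fun a => η (a + π) - η a) (Set.uIcc (-π) 0) := by fun_prop
    have := intermediate_value_uIcc hcg
    have h2 : (0:ℝ) ∈ Set.uIcc (η (-π + π) - η (-π)) (η (0 + π) - η 0) := by
      simp only [neg_add_cancel, zero_add, h0, h1, sub_zero, zero_sub]
      rw [Set.mem_uIcc]
      rcases le_total (η 0) 0 with h | h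
      · left; constructor <;> linarith
      · right; constructor <;> linarith
    obtain ⟨a, ha, hh⟩ := this h2
    rw [Set.uIcc_of_le (by linarith)] at ha
    exact ⟨a, ha, hh⟩
  set c := η a with hcdef
  have hca : η (a + π) = c := by linarith
  have key : ∀ r : ℝ, 0 < r → r < 1 → 0 ≤ ∫ x in (-π)..π, (η1 x ^ 2 - r ^ 2 * (η x - c) ^ 2) := by
    intro r hr0 hr1
    have hI : ∀ p q, IntervalIntegrable (fun x => η1 x ^ 2 - r ^ 2 * (η x - c) ^ 2) MeasureTheory.volume p q :=
      fun p q => Continuous.intervalIntegrable (by fun_prop) _ _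
    have e1 := tan_piece η η1 h hc c r (-π) a (a - π / 2) hr0 hr1 ha.1 (by linarith [ha.2]) (by linarith)
    have e2 := tan_piece η η1 h hc c r a (a + π) (a + π / 2) hr0 hr1 (by linarith) (by linarith) (by linarith)
    have e3 := tan_piece η η1 h hc c r (a + π) π (a + 3 * π / 2) hr0 hr1 (by linarith [ha.2]) (by linarith) (by linarith [ha.1])
    rw [← intervalIntegral.integral_add_adjacent_intervals (hI (-π) (a + π)) (hI (a + π) π),
      ← intervalIntegral.integral_add_adjacent_intervals (hI (-π) a) (hI a (a + π))]
    rw [← hcdef] at e1 e2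
    rw [hca] at e2 e3
    rw [h0] at e1
    rw [h1] at e3
    have : -π - (a - π / 2) = π - (a + 3 * π / 2) := by ring
    rw [this] at e1
    simp only [sub_self] at e1 e2 e3
    linarith
  have hI1 : IntervalIntegrable (fun x => η1 x ^ 2) MeasureTheory.volume (-π) π :=
    Continuous.intervalIntegrable (by fun_prop) _ _
  have hI2 : IntervalIntegrable (fun x => (η x - c) ^ 2) MeasureTheory.volume (-π) π :=
    Continuous.intervalIntegrable (by fun_prop) _ _
  have hI3 : IntervalIntegrable (fun x => η x ^ 2) MeasureTheory.volume (-π) π :=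
    Continuous.intervalIntegrable (by fun_prop) _ _
  have hI4 : IntervalIntegrable (fun x => η x) MeasureTheory.volume (-π) π :=
    Continuous.intervalIntegrable (by fun_prop) _ _
  have key2 : ∀ r : ℝ, 0 < r → r < 1 → r ^ 2 * (∫ x in (-π)..π, (η x - c) ^ 2) ≤ ∫ x in (-π)..π, η1 x ^ 2 := by
    intro r hr0 hr1
    have := key r hr0 hr1
    rw [intervalIntegral.integral_sub hI1 (hI2.const_mul _), intervalIntegral.integral_const_mul] at this
    linarith
  have key3 : (1:ℝ) ^ 2 * (∫ x in (-π)..π, (η x - c) ^ 2) ≤ ∫ x in (-π)..π, η1 x ^ 2 := by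
    have ht : Filter.Tendsto (fun r : ℝ => r ^ 2 * (∫ x in (-π)..π, (η x - c) ^ 2)) (nhdsWithin 1 (Set.Iio 1))
      (nhds ((1:ℝ) ^ 2 * (∫ x in (-π)..π, (η x - c) ^ 2))) := by
      apply Filter.Tendsto.mono_left _ nhdsWithin_le_nhds
      apply Continuous.tendsto
      fun_prop
    apply le_of_tendsto ht
    filter_upwards [Ioo_mem_nhdsLT (zero_lt_one' ℝ)] with r hr
    exact key2 r hr.1 hr.2
  have e : (fun x => (η x - c) ^ 2) = fun x => (η x ^ 2 - 2 * c * η x) + c ^ 2 := by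
    ext x; ring
  rw [e, intervalIntegral.integral_add (hI3.sub (hI4.const_mul _)) (by simp),
    intervalIntegral.integral_sub hI3 (hI4.const_mul _), intervalIntegral.integral_const_mul, hm] at key3
  simp only [intervalIntegral.integral_const, smul_eq_mul] at key3
  nlinarith [sq_nonneg c]

lemma coercive (μ : ℝ) (hμ0 : 0 < μ) (hμ1 : μ < 1) : ∃ k > 0, ∀ f f1 f2 : ℝ → ℝ,
    (∀ x, HasDerivAt f (f1 x) x) → (∀ x, HasDerivAt f1 (f2 x) x) → Continuous f2 →
    f (-π) = 0 → f π = 0 → f1 (-π) = 0 → f1 π = 0 →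
    k * ∫ x in (-π)..π, (f x ^ 2 + f1 x ^ 2 + f2 x ^ 2) ≤
      ∫ x in (-π)..π, (f2 x ^ 2 - (1 + μ) * f1 x ^ 2 + μ * f x ^ 2) := by
  have hpi := Real.pi_pos
  refine ⟨μ / (12 * exp π ^ 2 + 2), by positivity, ?_⟩
  intro f f1 f2 h h1 hc2 a b c d
  have hcf : Continuous f := continuous_iff_continuousAt.2 fun x => (h x).continuousAt
  have hcf1 : Continuous f1 := continuous_iff_continuousAt.2 fun x => (h1 x).continuousAt
  have II : ∀ g : ℝ → ℝ, Continuous g → IntervalIntegrable g MeasureTheory.volume (-π) π :=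
    fun g hg => hg.intervalIntegrable _ _
  have hW := wirtinger f1 f2 h1 hc2 c d (by
    rw [intervalIntegral.integral_eq_sub_of_hasDerivAt (fun x _ => h x) (II _ hcf1), a, b]; simp)
  -- weighted identity
  have hE : ∫ x in (-π)..π, (exp (-x) * (-1) * (f x ^ 2 + f1 x ^ 2) + exp (-x) * (2 * f x * f1 x + 2 * f1 x * f2 x)) = 0 := by
    rw [intervalIntegral.integral_eq_sub_of_hasDerivAt (f := fun x => exp (-x) * (f x ^ 2 + f1 x ^ 2)) _ (II _ (by fun_prop))]
    · simp [a, b, c, d]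
    · intro x _
      have e1 : HasDerivAt (fun x => exp (-x)) (exp (-x) * (-1)) x := (hasDerivAt_neg x).exp
      have e2 := ((h x).pow 2).add ((h1 x).pow 2)
      refine (e1.mul e2).congr_deriv ?_
      simp
  have hS : ∫ x in (-π)..π, (f2 x * f x + f1 x ^ 2) = 0 := by
    rw [intervalIntegral.integral_eq_sub_of_hasDerivAt (f := fun x => f1 x * f x) _ (II _ (by fun_prop))]
    · simp [a, b, c, d]
    · intro x _
      refine ((h1 x).mul (h x)).congr_deriv ?_
      ring
  have hG : ∫ x in (-π)..π, (f x ^ 2 + f1 x ^ 2 + f2 x ^ 2) ≤ ∫ x in (-π)..π, (12 * exp π ^ 2 + 2) * (f2 x + f x) ^ 2 := by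
    have : 0 ≤ ∫ x in (-π)..π, ((12 * exp π ^ 2 + 2) * (f2 x + f x) ^ 2 - (f x ^ 2 + f1 x ^ 2 + f2 x ^ 2) - 6 * exp π * (exp (-x) * (-1) * (f x ^ 2 + f1 x ^ 2) + exp (-x) * (2 * f x * f1 x + 2 * f1 x * f2 x))) := by
      apply intervalIntegral.integral_nonneg (by linarith)
      intro x hx
      have p1 : exp (-x) ≤ exp π := exp_le_exp.2 (by linarith [hx.1])
      have p2 : 1 ≤ exp π * exp (-x) := by
        rw [← exp_add]; exact Real.one_le_exp (by linarith [hx.2])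
      have p0 := exp_pos (-x)
      have p3 := exp_pos π
      set E := exp (-x)
      set M := exp π
      have p4 : M * E ≤ M ^ 2 := by nlinarith
      have q1 : 0 ≤ (M * E) * (2 * (f2 x + f x) - f1 x) ^ 2 := by positivity
      have q2 : 0 ≤ (M ^ 2 - M * E) * (f2 x + f x) ^ 2 := mul_nonneg (by linarith) (sq_nonneg _)
      have q3 : 0 ≤ (M * E - 1) * (f x ^ 2) := mul_nonneg (by linarith) (sq_nonneg _)
      have q4 : 0 ≤ (M * E - 1) * (f1 x ^ 2) := mul_nonneg (by linarith) (sq_nonneg _)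
      have q5 : f2 x ^ 2 ≤ 2 * (f2 x + f x) ^ 2 + 2 * f x ^ 2 := by nlinarith [sq_nonneg (f2 x + 2 * f x)]
      have q6 := sq_nonneg (f x)
      have q7 := sq_nonneg (f1 x)
      nlinarith
    rw [intervalIntegral.integral_sub (II _ (by fun_prop)) (II _ (by fun_prop)),
      intervalIntegral.integral_sub (II _ (by fun_prop)) (II _ (by fun_prop)),
      intervalIntegral.integral_const_mul (6 * exp π), hE] at this
    linarith
  rw [intervalIntegral.integral_const_mul] at hG
  have e : ∫ x in (-π)..π, (f2 x ^ 2 - (1 + μ) * f1 x ^ 2 + μ * f x ^ 2) =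
    μ * (∫ x in (-π)..π, (f2 x + f x) ^ 2) + (1 - μ) * ((∫ x in (-π)..π, f2 x ^ 2) - ∫ x in (-π)..π, f1 x ^ 2)
     - 2 * μ * ∫ x in (-π)..π, (f2 x * f x + f1 x ^ 2) := by
    rw [← intervalIntegral.integral_sub (II _ (by fun_prop)) (II _ (by fun_prop)),
      ← intervalIntegral.integral_const_mul, ← intervalIntegral.integral_const_mul, ← intervalIntegral.integral_const_mul,
      ← intervalIntegral.integral_add (II _ (by fun_prop)) (II _ (by fun_prop)),
      ← intervalIntegral.integral_sub (II _ (by fun_prop)) (II _ (by fun_prop))]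
    congr 1; ext x; ring
  rw [e, hS, div_mul_eq_mul_div, div_le_iff₀ (by positivity)]
  have p3 := exp_pos π
  have : 0 ≤ (1 - μ) * ((∫ x in (-π)..π, f2 x ^ 2) - ∫ x in (-π)..π, f1 x ^ 2) :=
    mul_nonneg (by linarith) (by linarith)
  have h9 : 0 ≤ 12 * exp π ^ 2 + 2 := by positivity
  nlinarith [mul_nonneg this h9]

lemma remainder (δ a b v e : ℝ) (hδ : δ ≤ 1 / 20) (ha : |a| ≤ δ) (hb : |b| ≤ δ)
    (hv : |v| ≤ δ) (he : |e| ≤ δ) :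
    1 / 2 ≤ (1 + a) ^ 2 - v * (1 + a) + 2 * b ^ 2 + b * e ∧
    -(30 * δ * (a ^ 2 + b ^ 2 + v ^ 2 + e ^ 2)) ≤
     ((1 + a) ^ 2 + b ^ 2) ^ 2 / ((1 + a) ^ 2 - v * (1 + a) + 2 * b ^ 2 + b * e) -
      (1 + 2 * a + v + a ^ 2 + a * v - b * e + v ^ 2) := by
  have hδ0 : 0 ≤ δ := (abs_nonneg a).trans ha
  have hbe : |b * e| ≤ (b ^ 2 + e ^ 2) / 2 := by
    rw [abs_mul]; nlinarith [sq_nonneg (|b| - |e|), sq_abs b, sq_abs e]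
  have hbe2 : |b * e| ≤ δ / 20 := by
    rw [abs_mul]; nlinarith [abs_nonneg b, abs_nonneg e]
  have h1a : |1 + a| ≤ 2 := by
    rw [abs_le] at *; constructor <;> linarith
  have hva : |v * (1 + a)| ≤ 2 * δ := by
    rw [abs_mul]; nlinarith [abs_nonneg v, abs_nonneg (1 + a)]
  have hv2 : v ^ 2 ≤ δ / 20 := by
    rw [← sq_abs]; nlinarith [abs_nonneg v]
  have hb2 : b ^ 2 ≤ δ / 20 := by
    rw [← sq_abs]; nlinarith [abs_nonneg b]
  have hq : 1 / 2 ≤ (1 + a) ^ 2 - v * (1 + a) + 2 * b ^ 2 + b * e := by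
    have := abs_le.1 hva
    have := abs_le.1 hbe2
    have := abs_le.1 ha
    nlinarith [sq_nonneg b]
  refine ⟨hq, ?_⟩
  set S := a ^ 2 + b ^ 2 + v ^ 2 + e ^ 2 with hS
  have hS0 : 0 ≤ S := by positivity
  have sa := sq_nonneg a
  have sb := sq_nonneg b
  have sv := sq_nonneg v
  have se := sq_nonneg e
  have t1 : 0 ≤ b ^ 4 := by positivity
  have t2 : |v * (1 + a) * (b * e)| ≤ δ * S := by
    rw [abs_mul]
    calc _ ≤ (2 * δ) * ((b ^ 2 + e ^ 2) / 2) := by gcongr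
      _ ≤ δ * S := by nlinarith
  have t3 : |v * (1 + a) * v ^ 2| ≤ 2 * δ * S := by
    rw [abs_mul, abs_of_nonneg sv]
    calc _ ≤ (2 * δ) * v ^ 2 := by gcongr
      _ ≤ 2 * δ * S := by nlinarith
  have t4 : |(2 * b ^ 2 + b * e) * (v * (1 + a) - b * e + v ^ 2)| ≤ 10 * δ * S := by
    rw [abs_mul]
    have u1 : |2 * b ^ 2 + b * e| ≤ 5 / 2 * S := by
      rw [abs_le] at hbe ⊢; constructor <;> linarith
    have u2 : |v * (1 + a) - b * e + v ^ 2| ≤ 4 * δ := by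
      rw [abs_le] at hbe2 hva ⊢; constructor <;> linarith
    calc _ ≤ (5 / 2 * S) * (4 * δ) := by gcongr
      _ = 10 * δ * S := by ring
  set q := (1 + a) ^ 2 - v * (1 + a) + 2 * b ^ 2 + b * e with hqd
  have hR : ((1 + a) ^ 2 + b ^ 2) ^ 2 - q * (1 + 2 * a + v + a ^ 2 + a * v - b * e + v ^ 2) =
      b ^ 4 - v * (1 + a) * (b * e) + v * (1 + a) * v ^ 2 -
        (2 * b ^ 2 + b * e) * (v * (1 + a) - b * e + v ^ 2) := by
    rw [hqd]; ring
  have hR2 : -(13 * δ * S) ≤ ((1 + a) ^ 2 + b ^ 2) ^ 2 - q * (1 + 2 * a + v + a ^ 2 + a * v - b * e + v ^ 2) := by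
    rw [hR]
    have := (abs_le.1 t2).2
    have := (abs_le.1 t3).1
    have := (abs_le.1 t4).2
    linarith
  rw [le_sub_iff_add_le, le_div_iff₀ (by linarith)]
  have : 0 ≤ δ * S := by positivity
  nlinarith

noncomputable def rr (m κ L s : ℝ) : ℝ := κ * m * Real.sqrt (1 - ((s - L) / κ) ^ 2)

lemma rr_comp (m κ L : ℝ) (hm : 0 < m) (hm2 : m < 1 / 2) (hκ : 0 < κ) (x : ℝ) (hx : x ∈ Icc (-π) π) :
    0 < cos (m * x) ∧ rr m κ L (L + κ * sin (m * x)) = κ * m * cos (m * x) := by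
  have hpi := Real.pi_pos
  have h : 0 < cos (m * x) := by
    apply Real.cos_pos_of_mem_Ioo
    constructor <;> nlinarith [hx.1, hx.2]
  refine ⟨h, ?_⟩
  unfold rr
  have : (L + κ * sin (m * x) - L) / κ = sin (m * x) := by field_simp; ring
  rw [this, ← Real.cos_sq', Real.sqrt_sq h.le]

lemma arc_lt (m κ L : ℝ) (hm : 0 < m) (hm2 : m < 1 / 2) (hκ : 0 < κ) (hL : L = κ * sin (m * π)) :
    0 < L ∧ L < κ := by
  have hpi := Real.pi_pos
  have h1 : 0 < sin (m * π) := Real.sin_pos_of_pos_of_lt_pi (by positivity) (by nlinarith)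
  have h2 : 0 < cos (m * π) := Real.cos_pos_of_mem_Ioo ⟨by nlinarith, by nlinarith⟩
  have h3 : sin (m * π) < 1 := by nlinarith [Real.sin_sq_add_cos_sq (m * π)]
  constructor
  · rw [hL]; positivity
  · rw [hL]; nlinarith

lemma rr_arg (κ L s : ℝ) (hκ : 0 < κ) (hs : s ∈ Ioo (L - κ) (L + κ)) :
    -1 < (s - L) / κ ∧ (s - L) / κ < 1 ∧ 0 < 1 - ((s - L) / κ) ^ 2 := by
  have h1 : -1 < (s - L) / κ := by rw [lt_div_iff₀ hκ]; linarith [hs.1]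
  have h2 : (s - L) / κ < 1 := by rw [div_lt_iff₀ hκ]; linarith [hs.2]
  exact ⟨h1, h2, by nlinarith⟩

lemma rr_pos (m κ L s : ℝ) (hm : 0 < m) (hκ : 0 < κ) (hs : s ∈ Ioo (L - κ) (L + κ)) :
    0 < rr m κ L s := by
  have := Real.sqrt_pos.2 (rr_arg κ L s hκ hs).2.2
  unfold rr; positivity

lemma rr_cont (m κ L : ℝ) : Continuous (rr m κ L) := by
  unfold rr; fun_prop

lemma rr_sq (m κ L s : ℝ) (hκ : 0 < κ) (hs : s ∈ Ioo (L - κ) (L + κ)) :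
    rr m κ L s ^ 2 = m ^ 2 * (κ ^ 2 - (s - L) ^ 2) := by
  unfold rr
  rw [mul_pow, Real.sq_sqrt (rr_arg κ L s hκ hs).2.2.le]
  field_simp

lemma rr_deriv (m κ L s : ℝ) (hm : 0 < m) (hκ : 0 < κ) (hs : s ∈ Ioo (L - κ) (L + κ)) :
    HasDerivAt (rr m κ L) (-(m ^ 2 * (s - L)) / rr m κ L s) s := by
  have h0 := (rr_arg κ L s hκ hs).2.2
  have h1 : HasDerivAt (fun s => 1 - ((s - L) / κ) ^ 2) (-(2 * ((s - L) / κ) * (1 / κ))) s := by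
    have := ((((hasDerivAt_id s).sub_const L).div_const κ).pow 2).const_sub 1
    refine this.congr_deriv ?_
    simp
  have h2 := (h1.sqrt h0.ne').const_mul (κ * m)
  refine h2.congr_deriv ?_
  have := Real.sqrt_pos.2 h0
  unfold rr
  field_simp

set_option maxHeartbeats 2000000 in
lemma quad (m κ L : ℝ) (hm : 0 < m) (hm2 : m < 1 / 2) (hκ : 0 < κ) (hL : L = κ * sin (m * π)) :
    ∃ k > 0, ∀ g g1 g2 : ℝ → ℝ,
    (∀ x, HasDerivAt g (g1 x) x) → (∀ x, HasDerivAt g1 (g2 x) x) → Continuous g2 →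
    g 0 = 0 → g (2 * L) = 0 → g1 0 = 0 → g1 (2 * L) = 0 →
    k * ∫ s in (0:ℝ)..(2 * L), (g s ^ 2 + g1 s ^ 2 + g2 s ^ 2) ≤
      ∫ s in (0:ℝ)..(2 * L), (rr m κ L s ^ 3 * g2 s ^ 2 + rr m κ L s * g s * g2 s
        + (-(m ^ 2 * (s - L)) / rr m κ L s) * g s * g1 s + m ^ 2 * g s ^ 2 / rr m κ L s) := by
  have hpi := Real.pi_pos
  have hLκ := arc_lt m κ L hm hm2 hκ hL
  obtain ⟨k0, hk0, hk⟩ := coercive (m ^ 2) (by positivity) (by nlinarith)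
  set R : ℝ → ℝ := fun x => κ * m * cos (m * x) with hR
  set τ : ℝ → ℝ := fun x => -m * tan (m * x) with hτ
  have hcpos : ∀ x ∈ Icc (-π) π, 0 < cos (m * x) := fun x hx => (rr_comp m κ L hm hm2 hκ x hx).1
  have hRpos : ∀ x ∈ Icc (-π) π, 0 < R x := fun x hx => by
    have := hcpos x hx
    simp only [hR]; positivity
  have hτd : ∀ x ∈ Icc (-π) π, HasDerivAt τ (-m ^ 2 - τ x ^ 2) x := by
    intro x hx
    have hc := hcpos x hx
    have h1 : HasDerivAt (fun x => m * x) m x := by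
      simpa using (hasDerivAt_id x).const_mul m
    have h2 := ((Real.hasDerivAt_tan hc.ne').comp x h1).const_mul (-m)
    refine h2.congr_deriv ?_
    simp only [hτ]
    rw [Real.tan_eq_sin_div_cos]
    field_simp
    nlinarith [Real.sin_sq_add_cos_sq (m * x)]
  have hτc : ContinuousOn τ (Icc (-π) π) := fun x hx => (hτd x hx).continuousAt.continuousWithinAt
  have hRc : Continuous R := by simp only [hR]; fun_prop
  have hRic : ContinuousOn (fun x => (R x)⁻¹) (Icc (-π) π) :=
    hRc.continuousOn.inv₀ fun x hx => (hRpos x hx).ne'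
  obtain ⟨K1, hK1⟩ := isCompact_Icc.exists_bound_of_continuousOn hτc
  obtain ⟨K2, hK2⟩ := isCompact_Icc.exists_bound_of_continuousOn (hRc.continuousOn (s := Icc (-π) π))
  obtain ⟨K3, hK3⟩ := isCompact_Icc.exists_bound_of_continuousOn hRic
  set K := max 1 (max K1 (max K2 K3)) with hKdef
  have hK : 1 ≤ K := le_max_left _ _
  have hKK1 : K1 ≤ K := (le_max_left _ _).trans (le_max_right _ _)
  have hKK2 : K2 ≤ K := (le_max_left _ _).trans ((le_max_right _ _).trans (le_max_right _ _))
  have hKK3 : K3 ≤ K := (le_max_right _ _).trans ((le_max_right _ _).trans (le_max_right _ _))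
  refine ⟨k0 / (4 * K ^ 7), by positivity, ?_⟩
  intro g g1 g2 hg hg1 hc2 a b c d
  have hcg : Continuous g := continuous_iff_continuousAt.2 fun x => (hg x).continuousAt
  have hcg1 : Continuous g1 := continuous_iff_continuousAt.2 fun x => (hg1 x).continuousAt
  set S : ℝ → ℝ := fun x => L + κ * sin (m * x) with hS
  have hSd : ∀ x, HasDerivAt S (R x) x := by
    intro x
    have h1 : HasDerivAt (fun x => m * x) m x := by
      simpa using (hasDerivAt_id x).const_mul m
    refine ((h1.sin.const_mul κ).const_add L).congr_deriv ?_
    simp only [hR]; ring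
  have hSc : Continuous S := by simp only [hS]; fun_prop
  have hS0 : S (-π) = 0 := by simp only [hS]; rw [mul_neg, Real.sin_neg, hL]; ring
  have hS1 : S π = 2 * L := by simp only [hS]; rw [← hL]; ring
  set R1 : ℝ → ℝ := fun x => -(m ^ 2 * (κ * sin (m * x))) with hR1
  have hRd : ∀ x, HasDerivAt R (R1 x) x := by
    intro x
    have h1 : HasDerivAt (fun x => m * x) m x := by
      simpa using (hasDerivAt_id x).const_mul m
    refine (h1.cos.const_mul (κ * m)).congr_deriv ?_
    simp only [hR1]; ring
  have hR1c : Continuous R1 := by simp only [hR1]; fun_prop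
  have hSR : ∀ x ∈ Icc (-π) π, rr m κ L (S x) = R x := fun x hx => (rr_comp m κ L hm hm2 hκ x hx).2
  have hSI : ∀ x ∈ Icc (-π) π, S x ∈ Ioo (L - κ) (L + κ) := by
    intro x hx
    have := hcpos x hx
    have h2 := Real.sin_sq_add_cos_sq (m * x)
    have h3 : sin (m * x) < 1 := by nlinarith
    have h4 : -1 < sin (m * x) := by nlinarith
    simp only [hS]
    constructor <;> nlinarith
  set f : ℝ → ℝ := fun x => g (S x) with hf
  set f1 : ℝ → ℝ := fun x => g1 (S x) * R x with hf1
  set f2 : ℝ → ℝ := fun x => g2 (S x) * R x * R x + g1 (S x) * R1 x with hf2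
  have hfd : ∀ x, HasDerivAt f (f1 x) x := fun x => (hg (S x)).comp x (hSd x)
  have hf1d : ∀ x, HasDerivAt f1 (f2 x) x := fun x => ((hg1 (S x)).comp x (hSd x)).mul (hRd x)
  have hfc : Continuous f := by simp only [hf]; fun_prop
  have hf1c : Continuous f1 := by simp only [hf1]; fun_prop
  have hf2c : Continuous f2 := by simp only [hf2]; fun_prop
  have hA := hk f f1 f2 hfd hf1d hf2c (by simp [hf, hS0, a]) (by simp [hf, hS1, b])
    (by simp [hf1, hS0, c]) (by simp [hf1, hS1, d])
  have huI : uIcc (-π) π = Icc (-π) π := uIcc_of_le (by linarith)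
  have cv : ∀ q : ℝ → ℝ, ContinuousOn q (Ioo (L - κ) (L + κ)) →
      ∫ s in (0:ℝ)..(2 * L), q s = ∫ x in (-π)..π, q (S x) * R x := by
    intro q hq
    have := intervalIntegral.integral_comp_mul_deriv' (a := -π) (b := π) (f := S) (f' := R) (g := q)
      (fun x _ => hSd x) hRc.continuousOn (hq.mono (by
        rintro _ ⟨x, hx, rfl⟩
        rw [huI] at hx
        exact hSI x hx))
    rw [hS0, hS1] at this
    rw [← this]; rfl
  have hrc := rr_cont m κ L
  have hrp : ∀ s ∈ Ioo (L - κ) (L + κ), rr m κ L s ≠ 0 := fun s hs => (rr_pos m κ L s hm hκ hs).ne'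
  rw [cv _ (by fun_prop), cv _ (by fun_prop (disch := assumption))]
  -- exact derivative
  have hDer : ∫ x in (-π)..π, (-(-m ^ 2 - τ x ^ 2) * f1 x ^ 2 - 2 * τ x * f1 x * f2 x + f1 x ^ 2 + f x * f2 x) = 0 := by
    rw [intervalIntegral.integral_eq_sub_of_hasDerivAt (f := fun x => -(τ x * f1 x ^ 2) + f x * f1 x)]
    · simp [hf, hf1, hS0, hS1, a, b, c, d]
    · intro x hx
      rw [huI] at hx
      refine ((((hτd x hx).mul ((hf1d x).pow 2)).neg).add ((hfd x).mul (hf1d x))).congr_deriv ?_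
      simp
      ring
    · apply ContinuousOn.intervalIntegrable
      rw [huI]
      fun_prop
  have hτR : ∀ x ∈ Icc (-π) π, R1 x = τ x * R x := by
    intro x hx
    have := hcpos x hx
    simp only [hR1, hτ, hR]
    rw [Real.tan_eq_sin_div_cos]; field_simp
  have hB : ∫ x in (-π)..π, ((rr m κ L (S x) ^ 3 * g2 (S x) ^ 2 + rr m κ L (S x) * g (S x) * g2 (S x)
        + (-(m ^ 2 * (S x - L)) / rr m κ L (S x)) * g (S x) * g1 (S x) + m ^ 2 * g (S x) ^ 2 / rr m κ L (S x)) * R x)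
      = ∫ x in (-π)..π, ((f2 x ^ 2 - (1 + m ^ 2) * f1 x ^ 2 + m ^ 2 * f x ^ 2) + (-(-m ^ 2 - τ x ^ 2) * f1 x ^ 2 - 2 * τ x * f1 x * f2 x + f1 x ^ 2 + f x * f2 x)) := by
    apply intervalIntegral.integral_congr
    intro x hx
    rw [huI] at hx
    have h1 := hRpos x hx
    have h2 := hτR x hx
    have h3 : S x - L = - R1 x / m ^ 2 := by simp only [hS, hR1]; field_simp; ring
    simp only []
    rw [hSR x hx, h3]
    simp only [hf, hf1, hf2]
    rw [h2]
    field_simp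
    ring
  rw [hB, intervalIntegral.integral_add (Continuous.intervalIntegrable (by fun_prop) _ _)
    (ContinuousOn.intervalIntegrable (by rw [huI]; fun_prop)), hDer, add_zero]
  refine le_trans ?_ hA
  rw [div_mul_eq_mul_div, div_le_iff₀ (by positivity), mul_assoc]
  apply mul_le_mul_of_nonneg_left _ hk0.le
  rw [mul_comm, ← intervalIntegral.integral_const_mul]
  apply intervalIntegral.integral_mono_on (by linarith) (Continuous.intervalIntegrable (by fun_prop) _ _)
    (Continuous.intervalIntegrable (by fun_prop) _ _)
  intro x hx
  have r0 := hRpos x hx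
  have r1 : |τ x| ≤ K := (hK1 x hx).trans hKK1
  have r2 : R x ≤ K := (le_abs_self _).trans ((hK2 x hx).trans hKK2)
  have r3 : (R x)⁻¹ ≤ K := (le_abs_self _).trans ((hK3 x hx).trans hKK3)
  have e1 : g1 (S x) = f1 x * (R x)⁻¹ := by simp only [hf1]; field_simp
  have e2 : g2 (S x) = (f2 x - τ x * f1 x) * (R x)⁻¹ ^ 2 := by
    simp only [hf1, hf2]; rw [hτR x hx]; field_simp; ring
  have e0 : g (S x) = f x := rfl
  rw [e0, e1, e2]
  have i0 : 0 < (R x)⁻¹ := inv_pos.2 r0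
  have j1 : (f1 x * (R x)⁻¹) ^ 2 ≤ f1 x ^ 2 * K ^ 2 := by
    rw [mul_pow]; gcongr
  have j2 : ((f2 x - τ x * f1 x) * (R x)⁻¹ ^ 2) ^ 2 ≤ (2 * f2 x ^ 2 + 2 * K ^ 2 * f1 x ^ 2) * K ^ 4 := by
    rw [mul_pow, ← pow_mul]
    have : (f2 x - τ x * f1 x) ^ 2 ≤ 2 * f2 x ^ 2 + 2 * K ^ 2 * f1 x ^ 2 := by
      have t2 : τ x ^ 2 ≤ K ^ 2 := by rw [← sq_abs]; gcongr
      nlinarith [sq_nonneg (f2 x + τ x * f1 x), mul_le_mul_of_nonneg_right t2 (sq_nonneg (f1 x))]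
    gcongr
  calc _ ≤ (f x ^ 2 + f1 x ^ 2 * K ^ 2 + (2 * f2 x ^ 2 + 2 * K ^ 2 * f1 x ^ 2) * K ^ 4) * K := by gcongr
    _ = f x ^ 2 * K + f1 x ^ 2 * K ^ 3 + 2 * f2 x ^ 2 * K ^ 5 + 2 * K ^ 7 * f1 x ^ 2 := by ring
    _ ≤ f x ^ 2 * K ^ 7 + f1 x ^ 2 * K ^ 7 + 2 * f2 x ^ 2 * K ^ 7 + 2 * K ^ 7 * f1 x ^ 2 := by
      have k1 : K ≤ K ^ 7 := le_self_pow₀ hK (by norm_num)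
      have k3 : K ^ 3 ≤ K ^ 7 := pow_le_pow_right₀ hK (by norm_num)
      have k5 : K ^ 5 ≤ K ^ 7 := pow_le_pow_right₀ hK (by norm_num)
      have l1 := mul_le_mul_of_nonneg_left k1 (sq_nonneg (f x))
      have l3 := mul_le_mul_of_nonneg_left k3 (sq_nonneg (f1 x))
      have l5 := mul_le_mul_of_nonneg_left k5 (sq_nonneg (f2 x))
      linarith
    _ ≤ _ := by
      have := mul_nonneg (sq_nonneg (f x)) (by positivity : 0 ≤ K ^ 7)
      have := mul_nonneg (sq_nonneg (f1 x)) (by positivity : 0 ≤ K ^ 7)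
      have := mul_nonneg (sq_nonneg (f2 x)) (by positivity : 0 ≤ K ^ 7)
      linarith

/-- lower bound for the remainder in terms of the radius of curvature -/
lemma rem_bound (K ε ρ ρ1 g g1 g2 : ℝ) (hK : 1 ≤ K) (hε : 0 < ε) (hεK : K ^ 2 * ε ≤ 1 / 20)
    (hρ : 0 < ρ) (h1 : ρ ≤ K) (h2 : ρ⁻¹ ≤ K) (h3 : |ρ1| ≤ K)
    (hg : |g| + |g1| + |g2| ≤ ε) :
    1 / 2 ≤ (1 + g / ρ) ^ 2 - ρ * g2 * (1 + g / ρ) + 2 * g1 ^ 2 + g1 * (-(g * ρ1) / ρ) ∧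
    -(60 * K ^ 7 * ε * (g ^ 2 + g1 ^ 2 + g2 ^ 2)) ≤
     ρ * (((1 + g / ρ) ^ 2 + g1 ^ 2) ^ 2 / ((1 + g / ρ) ^ 2 - ρ * g2 * (1 + g / ρ) + 2 * g1 ^ 2 + g1 * (-(g * ρ1) / ρ)) -
      (1 + 2 * (g / ρ) + ρ * g2 + (g / ρ) ^ 2 + (g / ρ) * (ρ * g2) - g1 * (-(g * ρ1) / ρ) + (ρ * g2) ^ 2)) := by
  have hi : 0 < ρ⁻¹ := inv_pos.2 hρ
  have a0 := abs_nonneg g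
  have a1 := abs_nonneg g1
  have a2 := abs_nonneg g2
  have K0 : 0 < K := by linarith
  have K1 : K ≤ K ^ 2 := by nlinarith
  have b1 : |g / ρ| ≤ |g| * K := by
    rw [div_eq_mul_inv, abs_mul, abs_of_pos hi]; gcongr
  have b2 : |ρ * g2| ≤ K * |g2| := by
    rw [abs_mul, abs_of_pos hρ]; gcongr
  have b3 : |-(g * ρ1) / ρ| ≤ |g| * K * K := by
    rw [div_eq_mul_inv, abs_mul, abs_neg, abs_mul, abs_of_pos hi]; gcongr
  have c1 : |g / ρ| ≤ K ^ 2 * ε := b1.trans (by nlinarith)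
  have c2 : |ρ * g2| ≤ K ^ 2 * ε := b2.trans (by nlinarith)
  have c3 : |-(g * ρ1) / ρ| ≤ K ^ 2 * ε := b3.trans (by nlinarith [mul_nonneg K0.le K0.le])
  have c4 : |g1| ≤ K ^ 2 * ε := by nlinarith
  obtain ⟨r1, r2⟩ := remainder (K ^ 2 * ε) (g / ρ) g1 (ρ * g2) (-(g * ρ1) / ρ) hεK c1 c4 c2 c3
  refine ⟨r1, ?_⟩
  have s1 : (g / ρ) ^ 2 ≤ g ^ 2 * K ^ 2 := by
    rw [← sq_abs, ← sq_abs g, ← mul_pow]; gcongr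
  have s2 : (ρ * g2) ^ 2 ≤ K ^ 2 * g2 ^ 2 := by
    rw [← sq_abs, ← sq_abs g2, ← mul_pow]; gcongr
  have s3 : (-(g * ρ1) / ρ) ^ 2 ≤ g ^ 2 * K ^ 4 := by
    rw [← sq_abs, ← sq_abs g]
    calc _ ≤ (|g| * K * K) ^ 2 := by gcongr
      _ = _ := by ring
  have k2 : K ^ 2 ≤ K ^ 4 := pow_le_pow_right₀ hK (by norm_num)
  have k4 : 1 ≤ K ^ 4 := one_le_pow₀ hK
  have s4 : (g / ρ) ^ 2 + g1 ^ 2 + (ρ * g2) ^ 2 + (-(g * ρ1) / ρ) ^ 2 ≤ 2 * K ^ 4 * (g ^ 2 + g1 ^ 2 + g2 ^ 2) := by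
    have l1 := mul_le_mul_of_nonneg_left k2 (sq_nonneg g)
    have l2 := mul_le_mul_of_nonneg_left k2 (sq_nonneg g2)
    have l3 := mul_le_mul_of_nonneg_left k4 (sq_nonneg g1)
    have l4 : 0 ≤ g1 ^ 2 * K ^ 4 := by positivity
    have l5 : 0 ≤ g2 ^ 2 * K ^ 4 := by positivity
    linarith
  set S := (g / ρ) ^ 2 + g1 ^ 2 + (ρ * g2) ^ 2 + (-(g * ρ1) / ρ) ^ 2 with hS
  have hS0 : 0 ≤ S := by positivity
  have t1 : ρ * (-(30 * (K ^ 2 * ε) * S)) ≤ _ := mul_le_mul_of_nonneg_left r2 hρ.le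
  refine le_trans ?_ t1
  have t2 : ρ * (30 * (K ^ 2 * ε) * S) ≤ K * (30 * (K ^ 2 * ε) * (2 * K ^ 4 * (g ^ 2 + g1 ^ 2 + g2 ^ 2))) := by
    gcongr
  calc _ = -(K * (30 * (K ^ 2 * ε) * (2 * K ^ 4 * (g ^ 2 + g1 ^ 2 + g2 ^ 2)))) := by ring
    _ ≤ -(ρ * (30 * (K ^ 2 * ε) * S)) := neg_le_neg t2
    _ = _ := by ring

lemma deriv2_of_open {J : Set ℝ} (hJ : IsOpen J) {u u1 u2 : ℝ → ℝ} (h : ∀ s ∈ J, HasDerivAt u (u1 s) s)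
    (h1 : ∀ s ∈ J, HasDerivAt u1 (u2 s) s) (s : ℝ) (hs : s ∈ J) :
    deriv u s = u1 s ∧ deriv (deriv u) s = u2 s := by
  refine ⟨(h s hs).deriv, ?_⟩
  have : deriv u =ᶠ[nhds s] u1 := by
    filter_upwards [hJ.mem_nhds hs] with t ht using (h t ht).deriv
  rw [this.deriv_eq, (h1 s hs).deriv]

set_option maxHeartbeats 4000000 in
lemma main_abs (m κ L : ℝ) (hm : 0 < m) (hm2 : m < 1 / 2) (hκ : 0 < κ) (hL : L = κ * sin (m * π))
    (x y al : ℝ → ℝ) (hx : ∀ s ∈ Ioo (L - κ) (L + κ), HasDerivAt x (-cos (al s)) s)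
    (hy : ∀ s ∈ Ioo (L - κ) (L + κ), HasDerivAt y (-sin (al s)) s)
    (hal : ∀ s ∈ Ioo (L - κ) (L + κ), HasDerivAt al (1 / rr m κ L s) s) :
    ∃ ε > (0:ℝ), ∀ φ : ℝ → ℝ, ContDiff ℝ 2 φ →
      (∃ s ∈ Set.Icc (0:ℝ) (2 * L), φ s ≠ 0) →
      φ 0 = 0 → φ (2 * L) = 0 → deriv φ 0 = 0 → deriv φ (2 * L) = 0 →
      (∀ s ∈ Set.Icc (0:ℝ) (2 * L),
          |φ s| + |deriv φ s| + |deriv (deriv φ) s| ≤ ε) →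
      ∀ c1 c2 : ℝ → ℝ, (∀ s, c1 s = x s + φ s * deriv y s) → (∀ s, c2 s = y s - φ s * deriv x s) →
      (∀ s ∈ Set.Icc (0:ℝ) (2 * L),
          0 < deriv c1 s * deriv (deriv c2) s - deriv c2 s * deriv (deriv c1) s) ∧
      (∫ s in (0:ℝ)..(2 * L), (deriv x s ^ 2 + deriv y s ^ 2) ^ 2 /
        (deriv x s * deriv (deriv y) s - deriv y s * deriv (deriv x) s)) -
        (1 - m ^ 2) * (∫ s in (0:ℝ)..(2 * L), (x s * deriv y s - y s * deriv x s)) <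
      (∫ s in (0:ℝ)..(2 * L), (deriv c1 s ^ 2 + deriv c2 s ^ 2) ^ 2 /
        (deriv c1 s * deriv (deriv c2) s - deriv c2 s * deriv (deriv c1) s)) -
        (1 - m ^ 2) * (∫ s in (0:ℝ)..(2 * L), (c1 s * deriv c2 s - c2 s * deriv c1 s)) := by
  obtain ⟨hL0, hLκ⟩ := arc_lt m κ L hm hm2 hκ hL
  obtain ⟨k, hk, hquad⟩ := quad m κ L hm hm2 hκ hL
  set J := Ioo (L - κ) (L + κ) with hJdef
  have hJ : IsOpen J := isOpen_Ioo
  set ρ := rr m κ L with hρdef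
  set ρ1 : ℝ → ℝ := fun s => -(m ^ 2 * (s - L)) / ρ s with hρ1def
  have hρp : ∀ s ∈ J, 0 < ρ s := fun s hs => rr_pos m κ L s hm hκ hs
  have hρd : ∀ s ∈ J, HasDerivAt ρ (ρ1 s) s := fun s hs => rr_deriv m κ L s hm hκ hs
  have hIJ : Icc (0:ℝ) (2 * L) ⊆ J := fun s hs => ⟨by linarith [hs.1], by linarith [hs.2]⟩
  have huI : uIcc (0:ℝ) (2 * L) = Icc (0:ℝ) (2 * L) := uIcc_of_le (by linarith)
  have hρc : Continuous ρ := rr_cont m κ L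
  have hρ0 : ∀ s ∈ Icc (0:ℝ) (2 * L), ρ s ≠ 0 := fun s hs => (hρp s (hIJ hs)).ne'
  have hρ1c : ContinuousOn ρ1 (Icc (0:ℝ) (2 * L)) := by
    simp only [hρ1def]; fun_prop (disch := assumption)
  have hxc : ContinuousOn x (Icc (0:ℝ) (2 * L)) := fun s hs => (hx s (hIJ hs)).continuousAt.continuousWithinAt
  have hyc : ContinuousOn y (Icc (0:ℝ) (2 * L)) := fun s hs => (hy s (hIJ hs)).continuousAt.continuousWithinAt
  have halc : ContinuousOn al (Icc (0:ℝ) (2 * L)) := fun s hs => (hal s (hIJ hs)).continuousAt.continuousWithinAt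
  have hρic : ContinuousOn (fun s => (ρ s)⁻¹) (Icc (0:ℝ) (2 * L)) := by
    fun_prop (disch := assumption)
  obtain ⟨K1, hK1⟩ := isCompact_Icc.exists_bound_of_continuousOn hρ1c
  obtain ⟨K2, hK2⟩ := isCompact_Icc.exists_bound_of_continuousOn (hρc.continuousOn (s := Icc (0:ℝ) (2 * L)))
  obtain ⟨K3, hK3⟩ := isCompact_Icc.exists_bound_of_continuousOn hρic
  set K := max 1 (max K1 (max K2 K3)) with hKdef
  have hK : 1 ≤ K := le_max_left _ _
  have hKK1 : K1 ≤ K := (le_max_left _ _).trans (le_max_right _ _)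
  have hKK2 : K2 ≤ K := (le_max_left _ _).trans ((le_max_right _ _).trans (le_max_right _ _))
  have hKK3 : K3 ≤ K := (le_max_right _ _).trans ((le_max_right _ _).trans (le_max_right _ _))
  have hK0 : 0 < K := by linarith
  clear_value K
  have hε0 : 0 < min (1 / (20 * K ^ 2)) (k / (120 * K ^ 7)) := by positivity
  have hεa : min (1 / (20 * K ^ 2)) (k / (120 * K ^ 7)) ≤ 1 / (20 * K ^ 2) := min_le_left _ _
  have hεb : min (1 / (20 * K ^ 2)) (k / (120 * K ^ 7)) ≤ k / (120 * K ^ 7) := min_le_right _ _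
  set ε := min (1 / (20 * K ^ 2)) (k / (120 * K ^ 7))
  clear_value ε
  rw [le_div_iff₀ (by positivity)] at hεa hεb
  refine ⟨ε, hε0, ?_⟩
  intro φ hφ hne b0 b1 b2 b3 hbd c1 c2 hc1 hc2
  set φ1 := deriv φ with hφ1
  set φ2 := deriv φ1 with hφ2
  have hφC : ContDiff ℝ 1 φ1 := by
    have : ContDiff ℝ (1 + 1) φ := by norm_num; exact hφ
    exact (contDiff_succ_iff_deriv.1 this).2.2
  have hφd : ∀ s, HasDerivAt φ (φ1 s) s := fun s => (hφ.differentiable (by norm_num) s).hasDerivAt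
  have hφ1d : ∀ s, HasDerivAt φ1 (φ2 s) s := fun s => (hφC.differentiable (by norm_num) s).hasDerivAt
  have hφc : Continuous φ := hφ.continuous
  have hφ1c : Continuous φ1 := hφC.continuous
  have hφ2c : Continuous φ2 := hφC.continuous_deriv (by norm_num)
  clear_value φ1 φ2
  have hq := hquad φ φ1 φ2 hφd hφ1d hφ2c b0 b1 b2 b3
  -- derivatives
  have hcosd : ∀ s ∈ J, HasDerivAt (fun s => cos (al s)) (-sin (al s) * (1 / ρ s)) s := fun s hs => (hal s hs).cos
  have hsind : ∀ s ∈ J, HasDerivAt (fun s => sin (al s)) (cos (al s) * (1 / ρ s)) s := fun s hs => (hal s hs).sin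
  have hDx := deriv2_of_open hJ hx (fun s hs => (hcosd s hs).neg)
  have hDy := deriv2_of_open hJ hy (fun s hs => (hsind s hs).neg)
  have hid : ∀ s ∈ J, HasDerivAt (fun s => φ s / ρ s) ((φ1 s * ρ s - φ s * ρ1 s) / ρ s ^ 2) s :=
    fun s hs => (hφd s).div (hρd s hs) (hρp s hs).ne'
  have hc1d : ∀ s ∈ J, HasDerivAt c1 (-cos (al s) - (φ1 s * sin (al s) + φ s / ρ s * cos (al s))) s := by
    intro s hs
    have e : c1 =ᶠ[nhds s] fun s => x s - φ s * sin (al s) := by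
      filter_upwards [hJ.mem_nhds hs] with t ht
      rw [hc1, (hDy t ht).1]; ring
    refine (HasDerivAt.congr_of_eventuallyEq ((hx s hs).sub ((hφd s).mul (hsind s hs))) e).congr_deriv ?_
    ring
  have hc2d : ∀ s ∈ J, HasDerivAt c2 (-sin (al s) + (φ1 s * cos (al s) - φ s / ρ s * sin (al s))) s := by
    intro s hs
    have e : c2 =ᶠ[nhds s] fun s => y s + φ s * cos (al s) := by
      filter_upwards [hJ.mem_nhds hs] with t ht
      rw [hc2, (hDx t ht).1]; ring
    refine (HasDerivAt.congr_of_eventuallyEq ((hy s hs).add ((hφd s).mul (hcosd s hs))) e).congr_deriv ?_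
    ring
  have hDc1 := deriv2_of_open hJ hc1d (fun s hs => (hcosd s hs).neg.sub
    (((hφ1d s).mul (hsind s hs)).add ((hid s hs).mul (hcosd s hs))))
  have hDc2 := deriv2_of_open hJ hc2d (fun s hs => (hsind s hs).neg.add
    (((hφ1d s).mul (hcosd s hs)).sub ((hid s hs).mul (hsind s hs))))
  set Q : ℝ → ℝ := fun s => (1 + φ s / ρ s) ^ 2 - ρ s * φ2 s * (1 + φ s / ρ s) + 2 * φ1 s ^ 2
    + φ1 s * (-(φ s * ρ1 s) / ρ s) with hQ
  have hdet : ∀ s ∈ J, deriv c1 s * deriv (deriv c2) s - deriv c2 s * deriv (deriv c1) s = Q s / ρ s := by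
    intro s hs
    have h0 := (hρp s hs).ne'
    have hsc := Real.sin_sq_add_cos_sq (al s)
    rw [(hDc1 s hs).1, (hDc1 s hs).2, (hDc2 s hs).1, (hDc2 s hs).2]
    simp only [hQ]
    generalize ρ s = r at *
    generalize ρ1 s = r1 at *
    generalize φ s = p at *
    generalize φ1 s = p1 at *
    generalize φ2 s = p2 at *
    generalize sin (al s) = S at *
    generalize cos (al s) = C at *
    trans (S ^ 2 + C ^ 2) * (((1 + p / r) ^ 2 - r * p2 * (1 + p / r) + 2 * p1 ^ 2
      + p1 * (-(p * r1) / r)) / r)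
    · field_simp
      ring
    · rw [hsc, one_mul]
  have hsp : ∀ s ∈ J, deriv c1 s ^ 2 + deriv c2 s ^ 2 = (1 + φ s / ρ s) ^ 2 + φ1 s ^ 2 := by
    intro s hs
    have hsc := Real.sin_sq_add_cos_sq (al s)
    rw [(hDc1 s hs).1, (hDc2 s hs).1]
    trans (sin (al s) ^ 2 + cos (al s) ^ 2) * ((1 + φ s / ρ s) ^ 2 + φ1 s ^ 2)
    · ring
    · rw [hsc, one_mul]
  have hrem : ∀ s ∈ Icc (0:ℝ) (2 * L), _ := fun s hs =>
    rem_bound K ε (ρ s) (ρ1 s) (φ s) (φ1 s) (φ2 s) hK hε0 (by linarith) (hρp s (hIJ hs))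
      ((le_abs_self _).trans ((hK2 s hs).trans hKK2))
      ((le_abs_self _).trans ((hK3 s hs).trans hKK3)) ((hK1 s hs).trans hKK1) (hbd s hs)
  have hQp : ∀ s ∈ Icc (0:ℝ) (2 * L), 0 < Q s := fun s hs => by
    have := (hrem s hs).1
    simp only [hQ]; linarith
  have hQc : ContinuousOn Q (Icc (0:ℝ) (2 * L)) := by
    simp only [hQ]; fun_prop (disch := assumption)
  have hQ0 : ∀ s ∈ Icc (0:ℝ) (2 * L), Q s ≠ 0 := fun s hs => (hQp s hs).ne'
  refine ⟨fun s hs => ?_, ?_⟩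
  · rw [hdet s (hIJ hs)]
    exact div_pos (hQp s hs) (hρp s (hIJ hs))
  have I1 : ∫ s in (0:ℝ)..(2 * L), (deriv x s ^ 2 + deriv y s ^ 2) ^ 2 /
        (deriv x s * deriv (deriv y) s - deriv y s * deriv (deriv x) s) = ∫ s in (0:ℝ)..(2 * L), ρ s := by
    apply intervalIntegral.integral_congr
    intro s hs
    rw [huI] at hs
    have hs' := hIJ hs
    have h0 := (hρp s hs').ne'
    have hsc := Real.sin_sq_add_cos_sq (al s)
    simp only []
    rw [(hDx s hs').1, (hDx s hs').2, (hDy s hs').1, (hDy s hs').2]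
    have e1 : (-cos (al s)) ^ 2 + (-sin (al s)) ^ 2 = 1 := by linarith
    have e2 : -cos (al s) * -(cos (al s) * (1 / ρ s)) - -sin (al s) * -(-sin (al s) * (1 / ρ s)) = 1 / ρ s := by
      trans (sin (al s) ^ 2 + cos (al s) ^ 2) * (1 / ρ s)
      · ring
      · rw [hsc, one_mul]
    rw [e1, e2]; simp
  set Aγ : ℝ → ℝ := fun s => x s * (-sin (al s)) - y s * (-cos (al s)) with hAγ
  have I2 : ∫ s in (0:ℝ)..(2 * L), (x s * deriv y s - y s * deriv x s) = ∫ s in (0:ℝ)..(2 * L), Aγ s := by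
    apply intervalIntegral.integral_congr
    intro s hs
    rw [huI] at hs
    have hs' := hIJ hs
    simp only [hAγ]
    rw [(hDx s hs').1, (hDy s hs').1]
  set Fc : ℝ → ℝ := fun s => ρ s * (((1 + φ s / ρ s) ^ 2 + φ1 s ^ 2) ^ 2 / Q s) with hFc
  have I3 : ∫ s in (0:ℝ)..(2 * L), (deriv c1 s ^ 2 + deriv c2 s ^ 2) ^ 2 /
        (deriv c1 s * deriv (deriv c2) s - deriv c2 s * deriv (deriv c1) s) = ∫ s in (0:ℝ)..(2 * L), Fc s := by
    apply intervalIntegral.integral_congr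
    intro s hs
    rw [huI] at hs
    have hs' := hIJ hs
    have h0 := (hρp s hs').ne'
    have h1 := hQ0 s hs
    simp only [hFc]
    rw [hdet s hs', hsp s hs']
    generalize Q s = q at *
    field_simp
  set DN : ℝ → ℝ := fun s => φ1 s * (x s * cos (al s) + y s * sin (al s)) +
    φ s * (-1 + (y s * cos (al s) - x s * sin (al s)) * (1 / ρ s)) with hDN
  set Ac : ℝ → ℝ := fun s => Aγ s + DN s + 2 * φ s + φ s ^ 2 / ρ s with hAc
  have I4 : ∫ s in (0:ℝ)..(2 * L), (c1 s * deriv c2 s - c2 s * deriv c1 s) = ∫ s in (0:ℝ)..(2 * L), Ac s := by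
    apply intervalIntegral.integral_congr
    intro s hs
    rw [huI] at hs
    have hs' := hIJ hs
    have h0 := (hρp s hs').ne'
    have hsc := Real.sin_sq_add_cos_sq (al s)
    simp only [hAc, hDN, hAγ]
    rw [(hDc1 s hs').1, (hDc2 s hs').1, hc1, hc2, (hDx s hs').1, (hDy s hs').1]
    have e : cos (al s) ^ 2 = 1 - sin (al s) ^ 2 := by linarith
    ring_nf
    rw [e]
    ring
  set B1 : ℝ → ℝ := fun s => φ2 s * ρ s ^ 2 + 2 * m ^ 2 * φ s - (1 - m ^ 2) * DN s with hB1
  have hDNc : ContinuousOn DN (Icc (0:ℝ) (2 * L)) := by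
    simp only [hDN]; fun_prop (disch := assumption)
  have hAγc : ContinuousOn Aγ (Icc (0:ℝ) (2 * L)) := by
    simp only [hAγ]; fun_prop (disch := assumption)
  have hAcc : ContinuousOn Ac (Icc (0:ℝ) (2 * L)) := by
    simp only [hAc]; fun_prop (disch := assumption)
  have hFcc : ContinuousOn Fc (Icc (0:ℝ) (2 * L)) := by
    simp only [hFc]; fun_prop (disch := assumption)
  have hB1c : ContinuousOn B1 (Icc (0:ℝ) (2 * L)) := by
    simp only [hB1]; fun_prop (disch := assumption)
  have I5 : ∫ s in (0:ℝ)..(2 * L), B1 s = 0 := by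
    rw [intervalIntegral.integral_eq_sub_of_hasDerivAt (f := fun s => φ1 s * ρ s ^ 2 + 2 * m ^ 2 * (φ s * (s - L)) -
      (1 - m ^ 2) * (φ s * (x s * cos (al s) + y s * sin (al s))))]
    · simp [b0, b1, b2, b3]
    · intro s hs
      rw [huI] at hs
      have hs' := hIJ hs
      have h0 := (hρp s hs').ne'
      have hsc := Real.sin_sq_add_cos_sq (al s)
      refine ((((hφ1d s).mul ((hρd s hs').pow 2)).add (((hφd s).mul ((hasDerivAt_id s).sub_const L)).const_mul (2 * m ^ 2))).sub
        (((hφd s).mul (((hx s hs').mul (hcosd s hs')).add ((hy s hs').mul (hsind s hs')))).const_mul (1 - m ^ 2))).congr_deriv ?_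
      have e : cos (al s) ^ 2 = 1 - sin (al s) ^ 2 := by linarith
      have e2 : ρ s * ρ1 s = -(m ^ 2 * (s - L)) := by simp only [hρ1def]; field_simp
      simp only [hB1, hDN, id, Pi.pow_apply]
      norm_num
      linear_combination (2 * φ1 s) * e2 - (1 - m ^ 2) * φ s * (-e)
    · exact ContinuousOn.intervalIntegrable (by rw [huI]; exact hB1c)
  have ii : ∀ g : ℝ → ℝ, ContinuousOn g (Icc (0:ℝ) (2 * L)) → IntervalIntegrable g MeasureTheory.volume 0 (2 * L) :=
    fun g hg => ContinuousOn.intervalIntegrable (by rw [huI]; exact hg)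
  set q : ℝ → ℝ := fun s => ρ s ^ 3 * φ2 s ^ 2 + ρ s * φ s * φ2 s
        + (-(m ^ 2 * (s - L)) / ρ s) * φ s * φ1 s + m ^ 2 * φ s ^ 2 / ρ s with hqdef
  have hqc : ContinuousOn q (Icc (0:ℝ) (2 * L)) := by
    simp only [hqdef]; fun_prop (disch := assumption)
  set Φ : ℝ → ℝ := fun s => φ s ^ 2 + φ1 s ^ 2 + φ2 s ^ 2 with hΦ
  have hΦc : Continuous Φ := by simp only [hΦ]; fun_prop
  have hΦpos : 0 < ∫ s in (0:ℝ)..(2 * L), Φ s := by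
    obtain ⟨s, hs, hs0⟩ := hne
    apply intervalIntegral.integral_pos (by linarith) hΦc.continuousOn
    · intro t _; simp only [hΦ]; positivity
    · exact ⟨s, hs, by simp only [hΦ]; positivity⟩
  have hmono : ∫ s in (0:ℝ)..(2 * L), (q s - k / 2 * Φ s) ≤
      ∫ s in (0:ℝ)..(2 * L), ((Fc s - ρ s) - (1 - m ^ 2) * (Ac s - Aγ s) - B1 s) := by
    apply intervalIntegral.integral_mono_on (by linarith) (ii _ (by fun_prop)) (ii _ (by fun_prop))
    intro s hs
    have h := (hrem s hs).2
    have h0 := hρ0 s hs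
    have hΦ0 : 0 ≤ Φ s := by simp only [hΦ]; positivity
    have hk2 : 60 * K ^ 7 * ε * Φ s ≤ k / 2 * Φ s := by
      apply mul_le_mul_of_nonneg_right _ hΦ0
      linarith
    have e : (Fc s - ρ s) - (1 - m ^ 2) * (Ac s - Aγ s) - B1 s - q s =
      ρ s * (((1 + φ s / ρ s) ^ 2 + φ1 s ^ 2) ^ 2 / Q s -
      (1 + 2 * (φ s / ρ s) + ρ s * φ2 s + (φ s / ρ s) ^ 2 + (φ s / ρ s) * (ρ s * φ2 s) - φ1 s * (-(φ s * ρ1 s) / ρ s) + (ρ s * φ2 s) ^ 2)) := by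
      have hr1 : -(m ^ 2 * (s - L)) / ρ s = ρ1 s := rfl
      simp only [hFc, hAc, hB1, hqdef]
      rw [hr1]
      generalize Q s = q'
      generalize DN s = d'
      generalize Aγ s = a'
      generalize ((1 + φ s / ρ s) ^ 2 + φ1 s ^ 2) ^ 2 / q' = z
      field_simp
      ring
    have h' : -(60 * K ^ 7 * ε * Φ s) ≤ _ := h
    have h'' := h'.trans_eq e.symm
    linarith
  rw [I1, I2, I3, I4]
  rw [intervalIntegral.integral_sub (ii _ hqc) (ii _ (by fun_prop)), intervalIntegral.integral_const_mul,
    intervalIntegral.integral_sub (ii _ (by fun_prop)) (ii _ hB1c),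
    intervalIntegral.integral_sub (ii _ (by fun_prop)) (ii _ (by fun_prop)),
    intervalIntegral.integral_const_mul,
    intervalIntegral.integral_sub (ii _ hFcc) (ii _ (by fun_prop)),
    intervalIntegral.integral_sub (ii _ hAcc) (ii _ hAγc), I5] at hmono
  have hq' : k * ∫ s in (0:ℝ)..(2 * L), Φ s ≤ ∫ s in (0:ℝ)..(2 * L), q s := hq
  nlinarith

lemma curve_deriv (m κ L π' σ : ℝ) (hm : 0 < m) (hm2 : m < 1 / 2) (hκ : 0 < κ) (hπ : 0 < π') (hσ : σ = π' * m)
    (y0 s : ℝ) (hs : s ∈ Ioo (L - κ) (L + κ)) :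
    HasDerivAt (fun s => arcsin ((s - L) / κ) / m) (1 / rr m κ L s) s ∧
    HasDerivAt (fun s => -(κ / 2) * ((σ / (π' + σ)) * sin (((π' + σ) / σ) * arcsin ((s - L) / κ)) +
      (σ / (π' - σ)) * sin (((π' - σ) / σ) * arcsin ((s - L) / κ)))) (-cos (arcsin ((s - L) / κ) / m)) s ∧
    HasDerivAt (fun s => κ / 2 * ((σ / (π' + σ)) * cos (((π' + σ) / σ) * arcsin ((s - L) / κ)) +
      (σ / (π' - σ)) * cos (((π' - σ) / σ) * arcsin ((s - L) / κ))) + y0) (-sin (arcsin ((s - L) / κ) / m)) s := by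
  obtain ⟨h1, h2, h3⟩ := rr_arg κ L s hκ hs
  have hsq := Real.sqrt_pos.2 h3
  have hu : HasDerivAt (fun s => (s - L) / κ) (1 / κ) s := ((hasDerivAt_id s).sub_const L).div_const κ
  have hθ : HasDerivAt (fun s => arcsin ((s - L) / κ)) (1 / √(1 - ((s - L) / κ) ^ 2) * (1 / κ)) s :=
    HasDerivAt.comp (h₂ := arcsin) s (Real.hasDerivAt_arcsin h1.ne' h2.ne) hu
  have hcos : √(1 - ((s - L) / κ) ^ 2) = cos (arcsin ((s - L) / κ)) := (Real.cos_arcsin _).symm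
  have hσ0 : 0 < σ := by rw [hσ]; positivity
  have hp : π' + σ ≠ 0 := by positivity
  have hn : π' - σ ≠ 0 := by rw [hσ]; have : 0 < π' - π' * m := by nlinarith
                             exact this.ne'
  have e1 : ∀ t : ℝ, (π' + σ) / σ * t = t / m + t := fun t => by rw [hσ]; field_simp
  have e2 : ∀ t : ℝ, (π' - σ) / σ * t = t / m - t := fun t => by rw [hσ]; field_simp
  refine ⟨?_, ?_, ?_⟩
  · refine (hθ.div_const m).congr_deriv ?_
    unfold rr
    field_simp
  · refine ((((hθ.const_mul ((π' + σ) / σ)).sin.const_mul (σ / (π' + σ))).add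
      ((hθ.const_mul ((π' - σ) / σ)).sin.const_mul (σ / (π' - σ)))).const_mul (-(κ / 2))).congr_deriv ?_
    rw [hcos] at hsq ⊢
    trans -(1 / 2) * (cos ((π' + σ) / σ * arcsin ((s - L) / κ)) + cos ((π' - σ) / σ * arcsin ((s - L) / κ))) /
      cos (arcsin ((s - L) / κ))
    · field_simp
    · rw [e1, e2, cos_add, cos_sub]
      field_simp
      ring
  · refine (((((hθ.const_mul ((π' + σ) / σ)).cos.const_mul (σ / (π' + σ))).add
      ((hθ.const_mul ((π' - σ) / σ)).cos.const_mul (σ / (π' - σ)))).const_mul (κ / 2)).add_const y0).congr_deriv ?_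
    rw [hcos] at hsq ⊢
    trans -(1 / 2) * (sin ((π' + σ) / σ * arcsin ((s - L) / κ)) + sin ((π' - σ) / σ * arcsin ((s - L) / κ))) /
      cos (arcsin ((s - L) / κ))
    · field_simp
      ring
    · rw [e1, e2, sin_add, sin_sub]
      field_simp
      ring

/-- local minimality of the critical curve for `F − λA` among small `C²` normal
graphs, with `λ = 2L/(L+x₀)`. -/
theorem statement19 (x0 L : ℝ) (hx0 : 0 < x0) (hL : 3 * x0 < L) :
    ∃ ε > (0:ℝ), ∀ φ : ℝ → ℝ, ContDiff ℝ 2 φ →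
      (∃ s ∈ Set.Icc (0:ℝ) (2 * L), φ s ≠ 0) →
      φ 0 = 0 → φ (2 * L) = 0 → deriv φ 0 = 0 → deriv φ (2 * L) = 0 →
      (∀ s ∈ Set.Icc (0:ℝ) (2 * L),
          |φ s| + |deriv φ s| + |deriv (deriv φ) s| ≤ ε) →
      (∀ s ∈ Set.Icc (0:ℝ) (2 * L),
          0 < deriv (pc1 x0 L φ) s * deriv (deriv (pc2 x0 L φ)) s -
              deriv (pc2 x0 L φ) s * deriv (deriv (pc1 x0 L φ)) s) ∧
      Ffun L (xc x0 L) (yc x0 L) - 2 * L / (L + x0) * Afun L (xc x0 L) (yc x0 L) <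
        Ffun L (pc1 x0 L φ) (pc2 x0 L φ) -
          2 * L / (L + x0) * Afun L (pc1 x0 L φ) (pc2 x0 L φ) ∧
      (Afun L (pc1 x0 L φ) (pc2 x0 L φ) = Afun L (xc x0 L) (yc x0 L) →
        Ffun L (xc x0 L) (yc x0 L) < Ffun L (pc1 x0 L φ) (pc2 x0 L φ)) := by
  have hpi := Real.pi_pos
  have hL0 : 0 < L := by linarith
  set m := Real.sqrt (x0 / (L + x0)) with hmdef
  have hm : 0 < m := Real.sqrt_pos.2 (by positivity)
  have hmsq : m ^ 2 = x0 / (L + x0) := Real.sq_sqrt (by positivity)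
  have hm2 : m < 1 / 2 := by
    have : m ^ 2 < 1 / 4 := by
      rw [hmsq, div_lt_iff₀ (by positivity)]; linarith
    nlinarith
  have hσ : sig x0 L = π * m := rfl
  have hsin : 0 < sin (π * m) := Real.sin_pos_of_pos_of_lt_pi (by positivity) (by nlinarith)
  have hκ : 0 < kap x0 L := by unfold kap; rw [hσ]; positivity
  have hLκ : L = kap x0 L * sin (m * π) := by
    unfold kap; rw [hσ, mul_comm m π]; field_simp
  have hlam : 2 * L / (L + x0) = 2 * (1 - m ^ 2) := by
    rw [hmsq]; field_simp; ring
  have hcv := curve_deriv m (kap x0 L) L π (sig x0 L) hm hm2 hκ hpi hσ (π * x0 / (sig x0 L * Real.tan (sig x0 L)))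
  obtain ⟨ε, hε, H⟩ := main_abs m (kap x0 L) L hm hm2 hκ hLκ (xc x0 L) (yc x0 L)
    (fun s => arcsin ((s - L) / kap x0 L) / m) (fun s hs => (hcv s hs).2.1) (fun s hs => (hcv s hs).2.2)
    (fun s hs => (hcv s hs).1)
  refine ⟨ε, hε, ?_⟩
  intro φ hφ hne b0 b1 b2 b3 hbd
  obtain ⟨r1, r2⟩ := H φ hφ hne b0 b1 b2 b3 hbd (pc1 x0 L φ) (pc2 x0 L φ) (fun s => rfl) (fun s => rfl)
  have r3 : Ffun L (xc x0 L) (yc x0 L) - 2 * L / (L + x0) * Afun L (xc x0 L) (yc x0 L) <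
        Ffun L (pc1 x0 L φ) (pc2 x0 L φ) -
          2 * L / (L + x0) * Afun L (pc1 x0 L φ) (pc2 x0 L φ) := by
    rw [hlam]
    unfold Ffun Afun
    linarith
  refine ⟨r1, r3, ?_⟩
  intro hA
  rw [hA] at r3
  linarith
end
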